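/- arXiv:math-ph/0304042 — 9 statements merged into one kernel-verified Lean document; each statement's English description precedes it below -/
import Mathlib

section
/- Let φ₀ = −p + 2q² + t and φ₁ = p in ℂ[q,p,t]. Then these two polynomials satisfy the Serre relations of type A₁⁽¹⁾ with respect to the Poisson bracket, namely ad(φ₀)³(φ₁) = 0 and ad(φ₁)³(φ₀) = 0 (the exponent 3 = −a₀₁ + 1 = −a₁₀ + 1 for the Cartan matrix of type A₁⁽¹⁾, whose off-diagonal entries are −2). -/
/-!
Serre relations of type A₁⁽¹⁾ for the invariant divisors of the second
Painlevé equation.  We work in the polynomial ring ℂ[q,p,t], realized as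
`MvPolynomial (Fin 3) ℂ` with `q = X 0`, `p = X 1`, `t = X 2`, equipped with
the Poisson bracket {φ,ψ} = (∂φ/∂p)(∂ψ/∂q) − (∂φ/∂q)(∂ψ/∂p).
-/

open MvPolynomial

noncomputable section

/-- The Poisson bracket on ℂ[q,p,t]: {φ,ψ} = φ_p ψ_q − φ_q ψ_p. -/
def poissonBracket (φ ψ : MvPolynomial (Fin 3) ℂ) : MvPolynomial (Fin 3) ℂ :=
  pderiv 1 φ * pderiv 0 ψ - pderiv 0 φ * pderiv 1 ψ

theorem pderiv_ofNat_fin3 (i : Fin 3) (n : ℕ) [n.AtLeastTwo] :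
    pderiv i (ofNat(n) : MvPolynomial (Fin 3) ℂ) = 0 :=
  (pderiv i).map_natCast n

/-- with φ₀ = −p + 2q² + t and φ₁ = p, one has
ad(φ₀)³(φ₁) = 0 and ad(φ₁)³(φ₀) = 0, the Serre relations of type A₁⁽¹⁾. -/
theorem serre_relations_A1_affine_PII :
    let q : MvPolynomial (Fin 3) ℂ := X 0
    let p : MvPolynomial (Fin 3) ℂ := X 1
    let t : MvPolynomial (Fin 3) ℂ := X 2
    let φ0 : MvPolynomial (Fin 3) ℂ := -p + 2 * q ^ 2 + t
    let φ1 : MvPolynomial (Fin 3) ℂ := p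
    poissonBracket φ0 (poissonBracket φ0 (poissonBracket φ0 φ1)) = 0 ∧
    poissonBracket φ1 (poissonBracket φ1 (poissonBracket φ1 φ0)) = 0 := by
  -- Both chains are `±4q`, then the constant `4`, then `0`.
  intro q p t φ0 φ1
  have hφ0p : pderiv 1 φ0 = -1 := by
    simp [φ0, q, p, t, pderiv_X, pderiv_ofNat_fin3]
  have hφ0q : pderiv 0 φ0 = 4 * q := by
    simp [φ0, q, p, t, pderiv_X, pderiv_ofNat_fin3]
    ring
  have hpp : pderiv 1 φ1 = 1 := by simp [φ1, p]
  have hpq : pderiv 0 φ1 = 0 := by simp [φ1, p, pderiv_X]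
  have hqp : pderiv 1 q = 0 := by simp [q, pderiv_X]
  have hqq : pderiv 0 q = 1 := by simp [q]
  constructor <;>
    simp [poissonBracket, hφ0p, hφ0q, hpp, hpq, hqp, hqq, pderiv_ofNat_fin3]

end
end

section
/- The assignments sᵢ(αⱼ) = αⱼ − αᵢaᵢⱼ, sᵢ(φⱼ) = φⱼ + (αᵢ/φᵢ)uᵢⱼ (for i,j ∈ {0,1,2}) and π(αⱼ) = α_{j+1}, π(φⱼ) = φ_{j+1} extend to field automorphisms s₀, s₁, s₂, π of K = ℂ(α₀,α₁,α₂,φ₀,φ₁,φ₂), and these automorphisms satisfy the fundamental relations of the extended affine Weyl group of type A₂⁽¹⁾: sᵢ² = 1, (sᵢs_{i+1})³ = 1, and πsᵢ = s_{i+1}π for all i ∈ {0,1,2} (indices read modulo 3). -/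
/-!
Each `sᵢ` fixes `φᵢ`, so it is defined as an endomorphism of the localization `ℂ[α, φ][1/φᵢ]`.
There it is an involution (`reflLoc_reflPoly`), hence injective on polynomials, and therefore
extends to the fraction field `K`; the extension is again an involution, thus an automorphism
(`reflEquiv`). The map `π` is induced by a permutation of the variables (`rotEquiv`).

An endomorphism of `K` over `ℂ` is determined by the images of the variables
(`algHom_ext_vars`), so all relations are identities of rational functions to be checked on the
six variables. In view of `sᵢ² = 1`, the relation `(sᵢ sᵢ₊₁)³ = 1` is equivalent to the braid
relation `sᵢ sᵢ₊₁ sᵢ = sᵢ₊₁ sᵢ sᵢ₊₁` (`reflEquiv_braid`).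
-/


/-!
The birational realization of the extended affine Weyl group of type A₂⁽¹⁾
as Bäcklund transformations of the symmetric form of the fourth Painlevé
equation.  K = ℂ(α₀,α₁,α₂,φ₀,φ₁,φ₂) is realized as the fraction field of
the polynomial ring in six variables indexed by `ZMod 3 ⊕ ZMod 3`
(`Sum.inl j` ↦ αⱼ, `Sum.inr j` ↦ φⱼ).
-/

open MvPolynomial

noncomputable section

abbrev PolyP4 := MvPolynomial (ZMod 3 ⊕ ZMod 3) ℂ

abbrev KP4 := FractionRing PolyP4

/-- The parameter variables α₀, α₁, α₂ of the symmetric form of P_IV. -/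
def αv (j : ZMod 3) : KP4 := algebraMap PolyP4 KP4 (X (Sum.inl j))

/-- The unknown variables φ₀, φ₁, φ₂ of the symmetric form of P_IV. -/
def φv (j : ZMod 3) : KP4 := algebraMap PolyP4 KP4 (X (Sum.inr j))

/-- The Cartan matrix of type A₂⁽¹⁾: aᵢᵢ = 2, aᵢⱼ = −1 for i ≠ j. -/
def cartanA2 (i j : ZMod 3) : ℤ := if i = j then 2 else -1

/-- The orientation matrix of the triangle: uᵢᵢ = 0, u_{i,i+1} = 1, u_{i,i+2} = −1. -/
def orientA2 (i j : ZMod 3) : ℤ := if j = i then 0 else if j = i + 1 then 1 else -1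

/-- Two `ℂ`-algebra endomorphisms of `K` agreeing on the six variables are equal. -/
lemma algHom_ext_vars {f g : KP4 →ₐ[ℂ] KP4} (hα : ∀ j, f (αv j) = g (αv j))
    (hφ : ∀ j, f (φv j) = g (φv j)) : f = g := by
  have hP : f.comp (IsScalarTower.toAlgHom ℂ PolyP4 KP4) =
      g.comp (IsScalarTower.toAlgHom ℂ PolyP4 KP4) := by
    apply MvPolynomial.algHom_ext
    rintro (j | j)
    · exact hα j
    · exact hφ j
  apply AlgHom.coe_ringHom_injective
  apply IsLocalization.ringHom_ext (nonZeroDivisors PolyP4)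
  exact congrArg (fun h : PolyP4 →ₐ[ℂ] KP4 => (h : PolyP4 →+* KP4)) hP

lemma algEquiv_ext_vars {f g : KP4 ≃ₐ[ℂ] KP4} (hα : ∀ j, f (αv j) = g (αv j))
    (hφ : ∀ j, f (φv j) = g (φv j)) : f = g := by
  have h : (f : KP4 →ₐ[ℂ] KP4) = g := algHom_ext_vars hα hφ
  ext x
  exact DFunLike.congr_fun h x

lemma φv_ne_zero (j : ZMod 3) : φv j ≠ 0 := by
  unfold φv
  rw [Ne, FaithfulSMul.algebraMap_eq_zero_iff PolyP4 KP4]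
  exact X_ne_zero _

/-- The ring `ℂ[α, φ][1/φᵢ]`, on which `sᵢ` already acts. -/
abbrev LocP4 (i : ZMod 3) := Localization.Away (X (Sum.inr i) : PolyP4)

/-- The inverse of `φᵢ` in `ℂ[α, φ][1/φᵢ]`. -/
def invφ (i : ZMod 3) : LocP4 i := IsLocalization.Away.invSelf (X (Sum.inr i) : PolyP4)

lemma φ_mul_invφ (i : ZMod 3) :
    algebraMap PolyP4 (LocP4 i) (X (Sum.inr i)) * invφ i = 1 :=
  IsLocalization.Away.mul_invSelf _

/-- The images under `sᵢ` of the variables, as elements of `ℂ[α, φ][1/φᵢ]`. -/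
def reflVar (i : ZMod 3) : ZMod 3 ⊕ ZMod 3 → LocP4 i
  | Sum.inl j => algebraMap PolyP4 _ (X (Sum.inl j)) -
      (cartanA2 i j : LocP4 i) * algebraMap PolyP4 _ (X (Sum.inl i))
  | Sum.inr j => algebraMap PolyP4 _ (X (Sum.inr j)) +
      (orientA2 i j : LocP4 i) * (algebraMap PolyP4 _ (X (Sum.inl i)) * invφ i)

/-- `sᵢ` on polynomials. -/
def reflPoly (i : ZMod 3) : PolyP4 →ₐ[ℂ] LocP4 i := aeval (reflVar i)

lemma cartanA2_self (i : ZMod 3) : cartanA2 i i = 2 := if_pos rfl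

lemma orientA2_self (i : ZMod 3) : orientA2 i i = 0 := if_pos rfl

lemma reflPoly_α (i j : ZMod 3) : reflPoly i (X (Sum.inl j)) =
    algebraMap PolyP4 _ (X (Sum.inl j)) -
      (cartanA2 i j : LocP4 i) * algebraMap PolyP4 _ (X (Sum.inl i)) :=
  aeval_X _ _

lemma reflPoly_φ (i j : ZMod 3) : reflPoly i (X (Sum.inr j)) =
    algebraMap PolyP4 _ (X (Sum.inr j)) +
      (orientA2 i j : LocP4 i) * (algebraMap PolyP4 _ (X (Sum.inl i)) * invφ i) :=
  aeval_X _ _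

lemma reflPoly_φ_self (i : ZMod 3) :
    reflPoly i (X (Sum.inr i)) = algebraMap PolyP4 _ (X (Sum.inr i)) := by
  rw [reflPoly_φ, orientA2_self]; simp

/-- `sᵢ` fixes `φᵢ`, hence extends to `ℂ[α, φ][1/φᵢ]`. -/
def reflLoc (i : ZMod 3) : LocP4 i →+* LocP4 i :=
  IsLocalization.Away.lift (X (Sum.inr i) : PolyP4) (g := (reflPoly i : PolyP4 →+* LocP4 i)) (by
    change IsUnit (reflPoly i (X (Sum.inr i)))
    rw [reflPoly_φ_self]
    exact IsLocalization.Away.algebraMap_isUnit _)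

lemma reflLoc_algebraMap (i : ZMod 3) (p : PolyP4) :
    reflLoc i (algebraMap PolyP4 _ p) = reflPoly i p :=
  IsLocalization.Away.lift_eq _ _ p

lemma reflLoc_invφ (i : ZMod 3) : reflLoc i (invφ i) = invφ i := by
  have h := congrArg (reflLoc i) (φ_mul_invφ i)
  rw [map_mul, reflLoc_algebraMap, reflPoly_φ_self, map_one] at h
  have h' := φ_mul_invφ i
  linear_combination invφ i * h - reflLoc i (invφ i) * h'

/-- `sᵢ` is an involution of `ℂ[α, φ][1/φᵢ]`; stated on polynomials, which gives injectivity. -/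
lemma reflLoc_reflPoly (i : ZMod 3) (p : PolyP4) :
    reflLoc i (reflPoly i p) = algebraMap PolyP4 _ p := by
  have h : (reflLoc i).comp (reflPoly i : PolyP4 →+* LocP4 i) =
      algebraMap PolyP4 (LocP4 i) := by
    apply MvPolynomial.ringHom_ext
    · intro c
      have hc : reflPoly i (C c) = algebraMap PolyP4 (LocP4 i) (C c) :=
        (reflPoly i).commutes c
      change reflLoc i (reflPoly i (C c)) = _
      rw [hc, reflLoc_algebraMap, hc]
    · rintro (j | j)
      · change reflLoc i (reflPoly i _) = _
        rw [reflPoly_α]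
        simp only [map_sub, map_mul, map_intCast, reflLoc_algebraMap, reflPoly_α, cartanA2_self]
        push_cast
        ring
      · change reflLoc i (reflPoly i _) = _
        rw [reflPoly_φ]
        simp only [map_add, map_mul, map_intCast, reflLoc_algebraMap, reflPoly_φ, reflPoly_α,
          cartanA2_self, reflLoc_invφ]
        push_cast
        ring
  exact DFunLike.congr_fun h p

lemma powers_φ_le (i : ZMod 3) :
    Submonoid.powers (X (Sum.inr i) : PolyP4) ≤ nonZeroDivisors PolyP4 :=
  powers_le_nonZeroDivisors_of_noZeroDivisors (X_ne_zero _)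

lemma reflPoly_injective (i : ZMod 3) : Function.Injective (reflPoly i) := by
  intro p q h
  apply IsLocalization.injective (LocP4 i) (powers_φ_le i)
  rw [← reflLoc_reflPoly, h, reflLoc_reflPoly]

/-- The inclusion of `ℂ[α, φ][1/φᵢ]` into `K`. -/
def locToK (i : ZMod 3) : LocP4 i →ₐ[PolyP4] KP4 :=
  IsLocalization.liftAlgHom (M := Submonoid.powers (X (Sum.inr i) : PolyP4))
    (f := Algebra.ofId PolyP4 KP4)
    (fun y => IsLocalization.map_units KP4 ⟨y.1, powers_φ_le i y.2⟩)

lemma locToK_algebraMap (i : ZMod 3) (p : PolyP4) :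
    locToK i (algebraMap PolyP4 _ p) = algebraMap PolyP4 KP4 p :=
  (locToK i).commutes p

lemma locToK_invφ (i : ZMod 3) : locToK i (invφ i) = (φv i)⁻¹ := by
  have h := congrArg (locToK i) (φ_mul_invφ i)
  rw [map_mul, locToK_algebraMap, map_one] at h
  exact eq_inv_of_mul_eq_one_right h

lemma locToK_injective (i : ZMod 3) : Function.Injective (locToK i) := by
  refine IsLocalization.lift_injective_iff (M := Submonoid.powers (X (Sum.inr i) : PolyP4))
    (fun y => IsLocalization.map_units KP4 ⟨y.1, powers_φ_le i y.2⟩) |>.2 fun p q => ?_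
  exact (IsLocalization.injective (LocP4 i) (powers_φ_le i)).eq_iff.trans
    (IsFractionRing.injective PolyP4 KP4).eq_iff.symm

/-- `sᵢ` on polynomials, with values in `K`. -/
def reflPolyK (i : ZMod 3) : PolyP4 →ₐ[ℂ] KP4 := ((locToK i).restrictScalars ℂ).comp (reflPoly i)

lemma reflPolyK_injective (i : ZMod 3) : Function.Injective (reflPolyK i) :=
  (locToK_injective i).comp (reflPoly_injective i)

/-- `sᵢ` as an endomorphism of `K`. -/
def reflHom (i : ZMod 3) : KP4 →ₐ[ℂ] KP4 :=
  IsFractionRing.liftAlgHom (g := reflPolyK i) (reflPolyK_injective i)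

lemma reflHom_algebraMap (i : ZMod 3) (p : PolyP4) :
    reflHom i (algebraMap PolyP4 KP4 p) = locToK i (reflPoly i p) :=
  IsFractionRing.lift_algebraMap (g := (reflPolyK i : PolyP4 →+* KP4)) (reflPolyK_injective i) p

lemma reflHom_α (i j : ZMod 3) :
    reflHom i (αv j) = αv j - (cartanA2 i j : KP4) * αv i := by
  rw [αv, reflHom_algebraMap, reflPoly_α]
  simp only [map_sub, map_mul, map_intCast, locToK_algebraMap]
  rfl

lemma reflHom_φ (i j : ZMod 3) :
    reflHom i (φv j) = φv j + (orientA2 i j : KP4) * (αv i / φv i) := by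
  rw [φv, reflHom_algebraMap, reflPoly_φ]
  simp only [map_add, map_mul, map_intCast, locToK_algebraMap, locToK_invφ]
  rfl

lemma reflHom_comp_self (i : ZMod 3) : (reflHom i).comp (reflHom i) = AlgHom.id ℂ KP4 := by
  apply algHom_ext_vars
  · intro j
    simp only [AlgHom.comp_apply, reflHom_α, map_sub, map_mul, map_intCast, cartanA2_self,
      AlgHom.id_apply]
    push_cast
    ring
  · intro j
    simp only [AlgHom.comp_apply, reflHom_φ, reflHom_α, map_add, map_mul, map_div₀,
      map_intCast, cartanA2_self, orientA2_self, AlgHom.id_apply]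
    push_cast
    ring

/-- The automorphism `sᵢ` of `K`. -/
def reflEquiv (i : ZMod 3) : KP4 ≃ₐ[ℂ] KP4 :=
  AlgEquiv.ofAlgHom (reflHom i) (reflHom i) (reflHom_comp_self i) (reflHom_comp_self i)

/-- The automorphism `π` of `K`, induced by the cyclic shift of the variables. -/
def rotEquiv : KP4 ≃ₐ[ℂ] KP4 :=
  IsFractionRing.algEquivOfAlgEquiv
    (renameEquiv ℂ (Equiv.sumCongr (Equiv.addRight (1 : ZMod 3)) (Equiv.addRight (1 : ZMod 3))))

lemma rotEquiv_α (j : ZMod 3) : rotEquiv (αv j) = αv (j + 1) := by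
  simp [rotEquiv, αv]

lemma rotEquiv_φ (j : ZMod 3) : rotEquiv (φv j) = φv (j + 1) := by
  simp [rotEquiv, φv]

/-- The braid relation on generators, for two automorphisms acting on `a = αᵢ`, `b = αᵢ₊₁`,
`c = αᵢ₊₂`, `x = φᵢ`, `y = φᵢ₊₁`, `z = φᵢ₊₂` as `s = sᵢ` and `t = sᵢ₊₁` do. -/
lemma braid_on_vars {F : Type*} [Field F] [Algebra ℂ F] (s t : F ≃ₐ[ℂ] F) {a b c x y z : F}
    (hx : x ≠ 0) (hy : y ≠ 0)
    (sa : s a = -a) (sb : s b = b + a) (sc : s c = c + a)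
    (sx : s x = x) (sy : s y = y + a / x) (sz : s z = z - a / x)
    (ta : t a = a + b) (tb : t b = -b) (tc : t c = c + b)
    (tx : t x = x - b / y) (ty : t y = y) (tz : t z = z + b / y) :
    s (t (s a)) = t (s (t a)) ∧ s (t (s b)) = t (s (t b)) ∧ s (t (s c)) = t (s (t c)) ∧
    s (t (s x)) = t (s (t x)) ∧ s (t (s y)) = t (s (t y)) ∧ s (t (s z)) = t (s (t z)) := by
  -- the denominators that occur are, up to factors `x` and `y`, the numerator `p` of `s y`,
  -- which is fixed by `t`, and the numerator `q` of `t x`, which is fixed by `s`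
  obtain ⟨p, hp⟩ : ∃ p, p = x * y + a := ⟨_, rfl⟩
  obtain ⟨q, hq⟩ : ∃ q, q = x * y - b := ⟨_, rfl⟩
  have sy' : s y = p / x := by rw [sy, hp]; field_simp
  have tx' : t x = q / y := by rw [tx, hq]; field_simp
  have hp0 : p ≠ 0 := by
    rintro rfl
    rw [zero_div] at sy'
    exact hy (by simpa using sy')
  have hq0 : q ≠ 0 := by
    rintro rfl
    rw [zero_div] at tx'
    exact hx (by simpa using tx')
  have tp : t p = p := by
    rw [hp, map_add, map_mul, tx, ty, ta]; field_simp; ring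
  have sq : s q = q := by
    rw [hq, map_sub, map_mul, sx, sy, sb]; field_simp; ring
  have sp : s p = x * y := by
    rw [hp, map_add, map_mul, sx, sy, sa]; field_simp; ring
  have tq : t q = x * y := by
    rw [hq, map_sub, map_mul, tx, ty, tb]; field_simp; ring
  refine ⟨?_, ?_, ?_, ?_, ?_, ?_⟩
  · simp only [sa, sb, ta, tb, map_add, map_neg]; ring
  · simp only [sa, sb, ta, tb, map_add, map_neg]; ring
  · simp only [sa, sb, sc, ta, tb, tc, map_add]; ring
  · simp only [sx, tx', sy', sq, tq, tp, map_div₀]; field_simp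
  · simp only [ty, tx', sy', sp, tp, sq, map_div₀]; field_simp
  · simp only [sa, sb, sz, ta, tb, tz, tx', sy', sq, tp, map_add, map_sub, map_div₀]
    field_simp
    rw [hp, hq]
    ring

lemma reflEquiv_mul_self (i : ZMod 3) : reflEquiv i * reflEquiv i = 1 := by
  ext x
  exact DFunLike.congr_fun (reflHom_comp_self i) x

lemma reflEquiv_α (i j : ZMod 3) :
    reflEquiv i (αv j) = αv j - (cartanA2 i j : KP4) * αv i := reflHom_α i j

lemma reflEquiv_φ (i j : ZMod 3) :
    reflEquiv i (φv j) = φv j + (orientA2 i j : KP4) * (αv i / φv i) := reflHom_φ i j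

lemma reflEquiv_braid (i : ZMod 3) : reflEquiv i * reflEquiv (i + 1) * reflEquiv i =
    reflEquiv (i + 1) * reflEquiv i * reflEquiv (i + 1) := by
  have hj : ∀ j, j = i ∨ j = i + 1 ∨ j = i + 2 := by revert i; decide
  have c1 : cartanA2 i (i + 1) = -1 := by revert i; decide
  have c2 : cartanA2 i (i + 2) = -1 := by revert i; decide
  have c3 : cartanA2 (i + 1) i = -1 := by revert i; decide
  have c4 : cartanA2 (i + 1) (i + 2) = -1 := by revert i; decide
  have u1 : orientA2 i (i + 1) = 1 := by revert i; decide
  have u2 : orientA2 i (i + 2) = -1 := by revert i; decide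
  have u3 : orientA2 (i + 1) i = -1 := by revert i; decide
  have u4 : orientA2 (i + 1) (i + 2) = 1 := by revert i; decide
  obtain ⟨ha, hb, hc, hx, hy, hz⟩ := braid_on_vars (reflEquiv i) (reflEquiv (i + 1))
    (a := αv i) (b := αv (i + 1)) (c := αv (i + 2))
    (x := φv i) (y := φv (i + 1)) (z := φv (i + 2)) (φv_ne_zero _) (φv_ne_zero _)
    (by rw [reflEquiv_α, cartanA2_self]; push_cast; ring)
    (by rw [reflEquiv_α, c1]; push_cast; ring)
    (by rw [reflEquiv_α, c2]; push_cast; ring)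
    (by rw [reflEquiv_φ, orientA2_self]; push_cast; ring)
    (by rw [reflEquiv_φ, u1]; push_cast; ring)
    (by rw [reflEquiv_φ, u2]; push_cast; ring)
    (by rw [reflEquiv_α, c3]; push_cast; ring)
    (by rw [reflEquiv_α, cartanA2_self]; push_cast; ring)
    (by rw [reflEquiv_α, c4]; push_cast; ring)
    (by rw [reflEquiv_φ, u3]; push_cast; ring)
    (by rw [reflEquiv_φ, orientA2_self]; push_cast; ring)
    (by rw [reflEquiv_φ, u4]; push_cast; ring)
  apply algEquiv_ext_vars <;> intro j
  · rcases hj j with h | h | h <;> rw [h]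
    exacts [ha, hb, hc]
  · rcases hj j with h | h | h <;> rw [h]
    exacts [hx, hy, hz]

/-- the assignments sᵢ(αⱼ) = αⱼ − αᵢaᵢⱼ, sᵢ(φⱼ) = φⱼ + (αᵢ/φᵢ)uᵢⱼ,
π(αⱼ) = α_{j+1}, π(φⱼ) = φ_{j+1} extend to automorphisms of
K = ℂ(α₀,α₁,α₂,φ₀,φ₁,φ₂) satisfying the fundamental relations
sᵢ² = 1, (sᵢs_{i+1})³ = 1, πsᵢ = s_{i+1}π of the extended affine Weyl group
of type A₂⁽¹⁾. -/
theorem extended_affine_Weyl_A2_realization_PIV :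
    ∃ (s : ZMod 3 → (KP4 ≃ₐ[ℂ] KP4)) (π : KP4 ≃ₐ[ℂ] KP4),
      (∀ i j : ZMod 3, s i (αv j) = αv j - (cartanA2 i j : KP4) * αv i) ∧
      (∀ i j : ZMod 3, s i (φv j) = φv j + (orientA2 i j : KP4) * (αv i / φv i)) ∧
      (∀ j : ZMod 3, π (αv j) = αv (j + 1)) ∧
      (∀ j : ZMod 3, π (φv j) = φv (j + 1)) ∧
      (∀ i : ZMod 3, s i * s i = 1) ∧
      (∀ i : ZMod 3, (s i * s (i + 1)) ^ 3 = 1) ∧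
      (∀ i : ZMod 3, π * s i = s (i + 1) * π) := by
  refine ⟨reflEquiv, rotEquiv, reflEquiv_α, reflEquiv_φ, rotEquiv_α, rotEquiv_φ,
    reflEquiv_mul_self, fun i => ?_, fun i => ?_⟩
  · have hb := reflEquiv_braid i
    have h1 := reflEquiv_mul_self i
    have h2 := reflEquiv_mul_self (i + 1)
    generalize reflEquiv i = s at *
    generalize reflEquiv (i + 1) = t at *
    calc (s * t) ^ 3 = (s * t * s) * (t * s * t) := by
          simp only [pow_succ, pow_zero, one_mul, mul_assoc]
      _ = (s * t * s) * (s * t * s) := by rw [hb]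
      _ = s * (t * (s * s) * t) * s := by simp only [mul_assoc]
      _ = 1 := by rw [h1, mul_one, h2, mul_one, h1]
  · have hc : ∀ j, cartanA2 (i + 1) (j + 1) = cartanA2 i j := by revert i; decide
    have hu : ∀ j, orientA2 (i + 1) (j + 1) = orientA2 i j := by revert i; decide
    apply algEquiv_ext_vars <;> intro j
    · simp only [AlgEquiv.mul_apply, reflEquiv_α, rotEquiv_α, map_sub, map_mul, map_intCast, hc]
    · simp only [AlgEquiv.mul_apply, reflEquiv_φ, rotEquiv_α, rotEquiv_φ, map_add, map_mul,
        map_div₀, map_intCast, hu]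

end
end

section
/- Let D be the unique ℂ-derivation of K = ℂ(α₀,α₁,α₂,φ₀,φ₁,φ₂) with D(αⱼ) = 0 and D(φⱼ) = φⱼ(φ_{j+1} − φ_{j+2}) + αⱼ for j ∈ {0,1,2} (indices modulo 3), encoding the symmetric form of the fourth Painlevé equation. Then each of the automorphisms s₀, s₁, s₂, π commutes with D: sᵢ ∘ D = D ∘ sᵢ and π ∘ D = D ∘ π; that is, s₀, s₁, s₂, π are Bäcklund transformations for the symmetric form of P_IV. -/
/-!
For an algebra automorphism `f` of `K`, both `f ∘ D` and `D ∘ f` are `f`-twisted derivations of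
`K` over `ℂ`, so they agree as soon as they agree on the generators `αⱼ`, `φⱼ`
(`commutes_of_generators`). On `αⱼ` both vanish, since `sᵢ` and `π` map `αⱼ` to a `ℤ`-linear
combination of the `α`'s. On `φⱼ` the claim for `π` is the cyclic symmetry of the system, and the
claim for `sᵢ` is an identity of rational functions, checked for `j = i, i + 1, i + 2` using
`D(αᵢ/φᵢ) = -αᵢ D(φᵢ)/φᵢ²`.
-/

/-!
The automorphisms s₀, s₁, s₂, π of K = ℂ(α₀,α₁,α₂,φ₀,φ₁,φ₂) are Bäcklund
transformations of the symmetric form of the fourth Painlevé equation: they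
commute with the derivation D encoding the system
φⱼ' = φⱼ(φ_{j+1} − φ_{j+2}) + αⱼ, αⱼ' = 0.
-/

open MvPolynomial

noncomputable section

/-- Two `f`-twisted derivations, here `f ∘ D` and `D ∘ f`, that agree on the generators of `K`
agree on `K`: the Leibniz rule handles polynomials and the quotient rule handles fractions. -/
lemma commutes_of_generators (D : Derivation ℂ KP4 KP4) (f : KP4 ≃ₐ[ℂ] KP4)
    (hα : ∀ j, f (D (αv j)) = D (f (αv j)))
    (hφ : ∀ j, f (D (φv j)) = D (f (φv j))) (x : KP4) : f (D x) = D (f x) := by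
  have hpoly : ∀ p : PolyP4, f (D (algebraMap PolyP4 KP4 p)) = D (f (algebraMap PolyP4 KP4 p)) := by
    intro p
    induction p using MvPolynomial.induction_on with
    | C a =>
      have h : algebraMap PolyP4 KP4 (C a) = algebraMap ℂ KP4 a :=
        (IsScalarTower.algebraMap_apply ℂ PolyP4 KP4 a).symm
      rw [h, f.commutes, D.map_algebraMap, map_zero]
    | add p q hp hq => simp only [map_add, hp, hq]
    | mul_X p n hp =>
      have hn : f (D (algebraMap PolyP4 KP4 (X n))) = D (f (algebraMap PolyP4 KP4 (X n))) := by
        rcases n with j | j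
        · exact hα j
        · exact hφ j
      simp only [map_mul, Derivation.leibniz, smul_eq_mul, map_add, hp, hn]
  obtain ⟨p, q, -, rfl⟩ := IsFractionRing.div_surjective (A := PolyP4) x
  simp only [Derivation.leibniz_div, map_div₀, smul_eq_mul, map_mul, map_sub, map_pow, map_inv₀, hpoly]

/-- if D is the (unique) ℂ-derivation of K with D(αⱼ) = 0 and
D(φⱼ) = φⱼ(φ_{j+1} − φ_{j+2}) + αⱼ, then the automorphisms s₀, s₁, s₂, π
(defined by sᵢ(αⱼ) = αⱼ − αᵢaᵢⱼ, sᵢ(φⱼ) = φⱼ + (αᵢ/φᵢ)uᵢⱼ, π(αⱼ) = α_{j+1},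
π(φⱼ) = φ_{j+1}) all commute with D, i.e. they are Bäcklund transformations
of the symmetric form of P_IV. -/
theorem backlund_transformations_commute_with_flow_PIV
    (D : Derivation ℂ KP4 KP4)
    (hDα : ∀ j : ZMod 3, D (αv j) = 0)
    (hDφ : ∀ j : ZMod 3, D (φv j) = φv j * (φv (j + 1) - φv (j + 2)) + αv j)
    (s : ZMod 3 → (KP4 ≃ₐ[ℂ] KP4)) (π : KP4 ≃ₐ[ℂ] KP4)
    (hsα : ∀ i j : ZMod 3, s i (αv j) = αv j - (cartanA2 i j : KP4) * αv i)
    (hsφ : ∀ i j : ZMod 3, s i (φv j) = φv j + (orientA2 i j : KP4) * (αv i / φv i))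
    (hπα : ∀ j : ZMod 3, π (αv j) = αv (j + 1))
    (hπφ : ∀ j : ZMod 3, π (φv j) = φv (j + 1)) :
    (∀ (i : ZMod 3) (x : KP4), s i (D x) = D (s i x)) ∧
    (∀ x : KP4, π (D x) = D (π x)) := by
  have h3 : ∀ j : ZMod 3, j + 1 + 2 = j := by decide
  have h12 : ∀ j : ZMod 3, j + 1 + 1 = j + 2 := by decide
  have h21 : ∀ j : ZMod 3, j + 2 + 1 = j := by decide
  have h22 : ∀ j : ZMod 3, j + 2 + 2 = j + 1 := by decide
  refine ⟨fun i => commutes_of_generators D (s i) (fun j => ?_) (fun j => ?_),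
    commutes_of_generators D π (fun j => ?_) (fun j => ?_)⟩
  · have hz : D ((cartanA2 i j : KP4) * αv i) = 0 := by
      rw [Derivation.leibniz, hDα, Derivation.map_intCast, smul_zero, smul_zero, add_zero]
    rw [hsα, hDα, map_zero, map_sub, hDα, hz, sub_zero]
  · have hne := φv_ne_zero i
    have hq : D (αv i / φv i)
        = -(αv i * (φv i * (φv (i + 1) - φv (i + 2)) + αv i)) / φv i ^ 2 := by
      rw [Derivation.leibniz_div, hDα, hDφ]
      simp only [smul_eq_mul]
      field_simp
      ring
    have hR : D (s i (φv j)) = D (φv j) + (orientA2 i j : KP4) * D (αv i / φv i) := by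
      rw [hsφ, map_add, Derivation.leibniz, Derivation.map_intCast, smul_zero, add_zero,
        smul_eq_mul]
    rw [hR, hq, hDφ, map_add, map_mul, map_sub, hsφ, hsφ, hsφ, hsα]
    have o0 : ∀ i, orientA2 i i = 0 := by decide
    have o1 : ∀ i, orientA2 i (i + 1) = 1 := by decide
    have o2 : ∀ i, orientA2 i (i + 2) = -1 := by decide
    have c0 : ∀ i, cartanA2 i i = 2 := by decide
    have c1 : ∀ i, cartanA2 i (i + 1) = -1 := by decide
    have c2 : ∀ i, cartanA2 i (i + 2) = -1 := by decide
    have hj : ∀ i j : ZMod 3, j = i ∨ j = i + 1 ∨ j = i + 2 := by decide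
    rcases hj i j with rfl | rfl | rfl
    · simp only [o0, o1, o2, c0]
      push_cast
      field_simp
      ring
    · simp only [h12, h3, o0, o1, o2, c1]
      push_cast
      field_simp
      ring
    · simp only [h21, h22, o0, o1, o2, c2]
      push_cast
      field_simp
      ring
  · rw [hπα, hDα, hDα, map_zero]
  · rw [hπφ, hDφ, hDφ, map_add, map_mul, map_sub, hπφ, hπφ, hπφ, hπα, add_right_comm j 2 1]

end
end

section
/- The subgroup of the automorphism group of K = ℂ(α₀,α₁,α₂,φ₀,φ₁,φ₂) generated by s₀, s₁, s₂ is isomorphic to the affine Weyl group W(A₂⁽¹⁾), i.e. to the Coxeter group with generators s₀, s₁, s₂ and defining relations sᵢ² = 1 and (sᵢsⱼ)³ = 1 for i ≠ j; in particular the realization is faithful. -/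
/-!
Faithfulness of the birational realization: the group of automorphisms of
K = ℂ(α₀,α₁,α₂,φ₀,φ₁,φ₂) generated by the Bäcklund transformations s₀, s₁, s₂
is isomorphic to the affine Weyl group W(A₂⁽¹⁾), presented by generators
s₀, s₁, s₂ with relations sᵢ² = 1 and (sᵢsⱼ)³ = 1 for i ≠ j.
-/

/-!
The linear action on the `α`s alone is already faithful. Inside the Coxeter group put
`Y = s₁s₀s₁s₂` and `Z = s₂s₀s₂s₁`, the translations by `α₂` and `α₁`. They commute, `s₁` and `s₂`
normalize `⟨Y, Z⟩`, and `s₀ = Y Z s₁s₂s₁`, so every element is `Yᵐ Zⁿ w` with `w` one of the six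
elements of `⟨s₁, s₂⟩` (`WeylA2Aux.normal_form`). On `K`, with `δ = α₀ + α₁ + α₂`, the element
`Yᵐ Zⁿ` sends `α₁` to `α₁ + (m - 2n)δ` and `α₂` to `α₂ + (n - 2m)δ`; linear independence of the
`α`s forces `w = 1` and `m = n = 0` as soon as `Yᵐ Zⁿ w` acts trivially.

That the realization is well defined is checked on the generators of `K`: `sᵢ² = 1` is immediate, and
the braid relation is an identity of rational functions (`WeylA2Aux.braid_apply`), the nonvanishing
of its denominators following from the injectivity of the `sᵢ`.
-/

open MvPolynomial

noncomputable section

/-- Defining relators of the affine Weyl group W(A₂⁽¹⁾): sᵢ² and (sᵢsⱼ)³ for i ≠ j. -/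
def weylA2Rels : Set (FreeGroup (ZMod 3)) :=
  {w | ∃ i : ZMod 3, w = FreeGroup.of i * FreeGroup.of i} ∪
  {w | ∃ i j : ZMod 3, i ≠ j ∧ w = (FreeGroup.of i * FreeGroup.of j) ^ 3}

/-- The affine Weyl group W(A₂⁽¹⁾) as an abstract Coxeter group, given by its
presentation. -/
abbrev WeylA2 := PresentedGroup weylA2Rels

namespace WeylA2Aux

/-! ### Normal forms in the affine Weyl group -/

section NormalForm

variable {G : Type*} [Group G]

/-- In a group generated by involutions `a, b, c` satisfying the braid relations, every element is
a translation times an element of the finite group generated by `b` and `c`. -/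
lemma normal_form (a b c : G) (ha : a * a = 1) (hb : b * b = 1) (hc : c * c = 1)
    (hab : a * b * a = b * a * b) (hac : a * c * a = c * a * c) (hbc : b * c * b = c * b * c)
    (hG : Subgroup.closure {a, b, c} = ⊤) (g : G) :
    ∃ (m n : ℤ) (w : G), (w = 1 ∨ w = b ∨ w = c ∨ w = b * c ∨ w = c * b ∨ w = b * c * b) ∧
      g = (b * a * b * c) ^ m * (c * a * c * b) ^ n * w := by
  have ha' (x : G) : a * (a * x) = x := by rw [← mul_assoc, ha, one_mul]
  have hb' (x : G) : b * (b * x) = x := by rw [← mul_assoc, hb, one_mul]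
  have hc' (x : G) : c * (c * x) = x := by rw [← mul_assoc, hc, one_mul]
  have hai : a⁻¹ = a := inv_eq_of_mul_eq_one_left ha
  have hbi : b⁻¹ = b := inv_eq_of_mul_eq_one_left hb
  have hci : c⁻¹ = c := inv_eq_of_mul_eq_one_left hc
  obtain ⟨Y, hY⟩ : ∃ Y, Y = b * a * b * c := ⟨_, rfl⟩
  obtain ⟨Z, hZ⟩ : ∃ Z, Z = c * a * c * b := ⟨_, rfl⟩
  rw [← hY, ← hZ]
  have hYZ : Y * Z = a * (b * c * b) := by
    rw [hY, hZ, ← hab]; simp only [mul_assoc, ha', hc']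
  have hZY : Z * Y = a * (b * c * b) := by
    rw [hY, hZ, ← hac, hbc]; simp only [mul_assoc, ha', hb']
  have hcomm : Commute Y Z := hYZ.trans hZY.symm
  have bY : SemiconjBy b Y (Y * Z) := by
    rw [SemiconjBy, hYZ, hY]; simp only [mul_assoc, hb', hb, mul_one]
  have bZ : SemiconjBy b Z Z⁻¹ := by
    rw [SemiconjBy, hZ]; simp only [mul_inv_rev, hai, hbi, hci, mul_assoc]
  have cY : SemiconjBy c Y Y⁻¹ := by
    rw [SemiconjBy, hY]; simp only [mul_inv_rev, hai, hbi, hci, mul_assoc]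
  have cZ : SemiconjBy c Z (Y * Z) := by
    rw [SemiconjBy, hYZ, hZ, hbc]; simp only [mul_assoc, hc', hc, mul_one]
  have hbcb (x : G) : c * (b * (c * x)) = b * (c * (b * x)) := by
    have := congrArg (· * x) hbc
    simpa only [mul_assoc] using this.symm
  have hbcb0 : c * (b * c) = b * (c * b) := by simpa only [mul_assoc] using hbc.symm
  let P : G → Prop := fun g => ∃ (m n : ℤ) (w : G),
    (w = 1 ∨ w = b ∨ w = c ∨ w = b * c ∨ w = c * b ∨ w = b * c * b) ∧ g = Y ^ m * Z ^ n * w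
  have Pb (g : G) (h : P g) : P (b * g) := by
    obtain ⟨m, n, w, hw, rfl⟩ := h
    refine ⟨m, m - n, b * w, ?_, ?_⟩
    · rcases hw with rfl | rfl | rfl | rfl | rfl | rfl <;> simp [mul_assoc, hb, hb']
    · have h1 := (bY.zpow_right m).mul_right (bZ.zpow_right n)
      rw [← mul_assoc, h1.eq, hcomm.mul_zpow, inv_zpow', sub_eq_add_neg, zpow_add]
      simp only [mul_assoc]
  have Pc (g : G) (h : P g) : P (c * g) := by
    obtain ⟨m, n, w, hw, rfl⟩ := h
    refine ⟨n - m, n, c * w, ?_, ?_⟩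
    · rcases hw with rfl | rfl | rfl | rfl | rfl | rfl <;>
        simp [mul_assoc, hc, hc', hbcb, hbcb0, hb]
    · have h1 := (cY.zpow_right m).mul_right (cZ.zpow_right n)
      rw [← mul_assoc, h1.eq, hcomm.mul_zpow, inv_zpow', sub_eq_neg_add, zpow_add]
      simp only [mul_assoc]
  have Pa (g : G) (h : P g) : P (a * g) := by
    have e : a * g = Y * Z * (b * (c * (b * g))) := by
      rw [hYZ]; simp only [mul_assoc, hb', hc']
    obtain ⟨m, n, w, hw, h⟩ := Pb _ (Pc _ (Pb _ h))
    refine ⟨1 + m, 1 + n, w, hw, ?_⟩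
    rw [e, h, zpow_add, zpow_add, zpow_one, zpow_one]
    have h2 : Z * Y ^ m = Y ^ m * Z := (hcomm.symm.zpow_right m).eq
    simp only [mul_assoc]
    rw [← mul_assoc Z, h2, mul_assoc]
  have hg : g ∈ Subgroup.closure {a, b, c} := hG ▸ Subgroup.mem_top g
  change P g
  refine Subgroup.closure_induction_left (p := fun g _ => P g) ?_ ?_ ?_ hg
  · exact ⟨0, 0, 1, Or.inl rfl, by simp⟩
  · rintro x hx y _ h
    rcases hx with rfl | rfl | rfl
    exacts [Pa _ h, Pb _ h, Pc _ h]
  · rintro x hx y _ h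
    rcases hx with rfl | rfl | rfl
    · rw [hai]; exact Pa _ h
    · rw [hbi]; exact Pb _ h
    · rw [hci]; exact Pc _ h

end NormalForm

/-! ### The field of rational functions -/

lemma algEquiv_ext {f g : KP4 ≃ₐ[ℂ] KP4} (hα : ∀ j, f (αv j) = g (αv j))
    (hφ : ∀ j, f (φv j) = g (φv j)) : f = g := by
  have h : (f : KP4 →ₐ[ℂ] KP4) = g := by
    refine IsLocalization.algHom_ext (R := ℂ) (A := PolyP4) (nonZeroDivisors PolyP4) ?_
    refine MvPolynomial.algHom_ext ?_
    rintro (j | j)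
    · exact hα j
    · exact hφ j
  exact AlgEquiv.ext fun x => DFunLike.congr_fun h x

lemma φv_ne_zero (j : ZMod 3) : φv j ≠ 0 := by
  unfold φv
  rw [Ne, FaithfulSMul.algebraMap_eq_zero_iff]
  exact MvPolynomial.X_ne_zero _

lemma αv_independent (p q r : ℤ) (h : (p : KP4) * αv 0 + q * αv 1 + r * αv 2 = 0) :
    p = 0 ∧ q = 0 ∧ r = 0 := by
  have h1 : algebraMap PolyP4 KP4 ((p : PolyP4) * X (Sum.inl 0) + (q : PolyP4) * X (Sum.inl 1)
      + (r : PolyP4) * X (Sum.inl 2)) = 0 := by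
    simpa [αv] using h
  rw [FaithfulSMul.algebraMap_eq_zero_iff] at h1
  have ev (v : ZMod 3 ⊕ ZMod 3 → ℂ) := congrArg (MvPolynomial.eval v) h1
  have d10 : (1 : ZMod 3) ≠ 0 := by decide
  have d20 : (2 : ZMod 3) ≠ 0 := by decide
  have d21 : (2 : ZMod 3) ≠ 1 := by decide
  refine ⟨?_, ?_, ?_⟩
  · simpa [d10, d20] using ev (fun i => if i = Sum.inl 0 then 1 else 0)
  · simpa [d10.symm, d21] using ev (fun i => if i = Sum.inl 1 then 1 else 0)
  · simpa [d20.symm, d21.symm] using ev (fun i => if i = Sum.inl 2 then 1 else 0)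

/-! ### The defining relations for the automorphisms -/

/-- The braid relation for two adjacent reflections `S`, `T`, on each of the six generators. Here
`a, b, c` are the parameters and `p, q, r` the unknowns, listed cyclically from the index of `S`. -/
lemma braid_apply {F : Type*} [Field F] [Algebra ℂ F] (S T : F ≃ₐ[ℂ] F) (a b c p q r : F)
    (hp : p ≠ 0) (hq : q ≠ 0)
    (Sa : S a = -a) (Sb : S b = b + a) (Sc : S c = c + a)
    (Sp : S p = p) (Sq : S q = q + a / p) (Sr : S r = r - a / p)
    (Ta : T a = a + b) (Tb : T b = -b) (Tc : T c = c + b)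
    (Tp : T p = p - b / q) (Tq : T q = q) (Tr : T r = r + b / q) :
    (S (T (S a)) = T (S (T a)) ∧ S (T (S b)) = T (S (T b)) ∧ S (T (S c)) = T (S (T c))) ∧
    (S (T (S p)) = T (S (T p)) ∧ S (T (S q)) = T (S (T q)) ∧ S (T (S r)) = T (S (T r))) := by
  have h1 : q * p + a ≠ 0 := by
    have h : S q ≠ 0 := by simpa using hq
    rw [Sq] at h
    intro h0
    apply h
    field_simp
    linear_combination h0
  have h2 : p * q - b ≠ 0 := by
    have h : T p ≠ 0 := by simpa using hp
    rw [Tp] at h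
    intro h0
    apply h
    field_simp
    linear_combination h0
  have h1' : p * q + a ≠ 0 := by rwa [mul_comm p q]
  have h2' : q * p - b ≠ 0 := by rwa [mul_comm q p]
  have e1 : q + a / p = (q * p + a) / p := by field_simp
  have e2 : p - b / q = (p * q - b) / q := by field_simp
  -- `ST p` and `TS q` factor into the quantities just shown to be nonzero.
  have e3 : S (T p) = p * (p * q - b) / (q * p + a) := by
    rw [Tp, map_sub, map_div₀, Sp, Sb, Sq, e1]; field_simp; ring
  have e4 : T (S q) = q * (q * p + a) / (p * q - b) := by
    rw [Sq, map_add, map_div₀, Tp, Ta, Tq, e2]; field_simp; ring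
  refine ⟨⟨?_, ?_, ?_⟩, ?_, ?_, ?_⟩
  · simp only [Sa, Sb, Ta, Tb, map_add, map_neg]; ring
  · simp only [Sa, Sb, Ta, Tb, map_add, map_neg]; ring
  · simp only [Sa, Sb, Sc, Ta, Tb, Tc, map_add]; ring
  · have e : T (q * p + a) = p * q + a := by
      rw [map_add, map_mul, Ta, Tp, Tq]; field_simp; ring
    rw [Sp, e3, map_div₀, e]
    simp only [map_mul, map_sub, Tb, Tp, Tq, e2]
    field_simp; ring
  · have e : S (p * q - b) = p * q - b := by
      rw [map_sub, map_mul, Sb, Sp, Sq]; field_simp; ring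
    rw [Tq, e4, map_div₀, e]
    simp only [map_mul, map_add, Sa, Sp, Sq, e1]
    field_simp; ring
  · rw [Sr, Tr, map_sub, map_add, map_sub, map_add, map_div₀, map_div₀, map_div₀, map_div₀,
      Tr, Sr, Ta, Sb, map_sub, map_add, map_add, map_add, map_div₀, map_div₀, e3, e4]
    simp only [Sa, Sb, Sr, Sq, Ta, Tb, Tr, Tp, e1, e2]
    field_simp; ring

lemma s_α_self (s : ZMod 3 → (KP4 ≃ₐ[ℂ] KP4))
    (hsα : ∀ i j : ZMod 3, s i (αv j) = αv j - (cartanA2 i j : KP4) * αv i)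
    (i : ZMod 3) : s i (αv i) = -αv i := by
  rw [hsα, cartanA2, if_pos rfl]; push_cast; ring

lemma s_α_ne (s : ZMod 3 → (KP4 ≃ₐ[ℂ] KP4))
    (hsα : ∀ i j : ZMod 3, s i (αv j) = αv j - (cartanA2 i j : KP4) * αv i)
    {i j : ZMod 3} (h : i ≠ j) : s i (αv j) = αv j + αv i := by
  rw [hsα, cartanA2, if_neg h]; push_cast; ring

lemma s_φ_self (s : ZMod 3 → (KP4 ≃ₐ[ℂ] KP4))
    (hsφ : ∀ i j : ZMod 3, s i (φv j) = φv j + (orientA2 i j : KP4) * (αv i / φv i))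
    (i : ZMod 3) : s i (φv i) = φv i := by
  rw [hsφ, orientA2, if_pos rfl]; simp

lemma s_φ_succ (s : ZMod 3 → (KP4 ≃ₐ[ℂ] KP4))
    (hsφ : ∀ i j : ZMod 3, s i (φv j) = φv j + (orientA2 i j : KP4) * (αv i / φv i))
    (i : ZMod 3) : s i (φv (i + 1)) = φv (i + 1) + αv i / φv i := by
  rw [hsφ, orientA2, if_neg (by simp), if_pos rfl]; simp

lemma s_φ_pred (s : ZMod 3 → (KP4 ≃ₐ[ℂ] KP4))
    (hsφ : ∀ i j : ZMod 3, s i (φv j) = φv j + (orientA2 i j : KP4) * (αv i / φv i))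
    {i j : ZMod 3} (h : i = j + 1) : s i (φv j) = φv j - αv i / φv i := by
  subst h
  rw [hsφ, orientA2, if_neg (by simp), if_neg (by revert j; decide)]; simp [sub_eq_add_neg]

lemma s_mul_self (s : ZMod 3 → (KP4 ≃ₐ[ℂ] KP4))
    (hsα : ∀ i j : ZMod 3, s i (αv j) = αv j - (cartanA2 i j : KP4) * αv i)
    (hsφ : ∀ i j : ZMod 3, s i (φv j) = φv j + (orientA2 i j : KP4) * (αv i / φv i))
    (i : ZMod 3) : s i * s i = 1 := by
  have hα : s i (αv i) = -αv i := s_α_self s hsα i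
  have hφ : s i (φv i) = φv i := s_φ_self s hsφ i
  apply algEquiv_ext <;> intro j
  · rw [AlgEquiv.mul_apply, hsα, map_sub, map_mul, hα, hsα, map_intCast, AlgEquiv.one_apply]
    ring
  · rw [AlgEquiv.mul_apply, hsφ, map_add, map_mul, map_div₀, hα, hφ, hsφ, map_intCast,
      AlgEquiv.one_apply]
    ring

lemma s_braid_succ (s : ZMod 3 → (KP4 ≃ₐ[ℂ] KP4))
    (hsα : ∀ i j : ZMod 3, s i (αv j) = αv j - (cartanA2 i j : KP4) * αv i)
    (hsφ : ∀ i j : ZMod 3, s i (φv j) = φv j + (orientA2 i j : KP4) * (αv i / φv i))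
    (i : ZMod 3) : s i * s (i + 1) * s i = s (i + 1) * s i * s (i + 1) := by
  have n1 : i ≠ i + 1 := by simp
  have n2 : i ≠ i + 2 := by revert i; decide
  have n3 : i + 1 ≠ i + 2 := by revert i; decide
  have p1 : i = i + 2 + 1 := by revert i; decide
  have p2 : i + 1 + 1 = i + 2 := by ring
  obtain ⟨⟨a0, a1, a2⟩, f0, f1, f2⟩ := braid_apply (s i) (s (i + 1))
    (αv i) (αv (i + 1)) (αv (i + 2)) (φv i) (φv (i + 1)) (φv (i + 2))
    (φv_ne_zero _) (φv_ne_zero _)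
    (s_α_self s hsα _) (s_α_ne s hsα n1) (s_α_ne s hsα n2)
    (s_φ_self s hsφ _) (s_φ_succ s hsφ _) (s_φ_pred s hsφ p1)
    (s_α_ne s hsα n1.symm) (s_α_self s hsα _) (s_α_ne s hsα n3)
    (s_φ_pred s hsφ rfl) (s_φ_self s hsφ _) (p2 ▸ s_φ_succ s hsφ (i + 1))
  have cases3 (j : ZMod 3) : j = i ∨ j = i + 1 ∨ j = i + 2 := by exact (by decide : ∀ i j : ZMod 3, j = i ∨ j = i + 1 ∨ j = i + 2) i j
  apply algEquiv_ext <;> intro j <;> rcases cases3 j with rfl | rfl | rfl <;> assumption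

lemma s_braid (s : ZMod 3 → (KP4 ≃ₐ[ℂ] KP4))
    (hsα : ∀ i j : ZMod 3, s i (αv j) = αv j - (cartanA2 i j : KP4) * αv i)
    (hsφ : ∀ i j : ZMod 3, s i (φv j) = φv j + (orientA2 i j : KP4) * (αv i / φv i))
    {i j : ZMod 3} (h : i ≠ j) : s i * s j * s i = s j * s i * s j := by
  have : j = i + 1 ∨ i = j + 1 := by revert i j; decide
  rcases this with rfl | rfl
  · exact s_braid_succ s hsα hsφ i
  · exact (s_braid_succ s hsα hsφ j).symm

lemma s_rels (s : ZMod 3 → (KP4 ≃ₐ[ℂ] KP4))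
    (hsα : ∀ i j : ZMod 3, s i (αv j) = αv j - (cartanA2 i j : KP4) * αv i)
    (hsφ : ∀ i j : ZMod 3, s i (φv j) = φv j + (orientA2 i j : KP4) * (αv i / φv i))
    (r : FreeGroup (ZMod 3)) (hr : r ∈ weylA2Rels) : FreeGroup.lift s r = 1 := by
  rcases hr with ⟨i, rfl⟩ | ⟨i, j, hij, rfl⟩
  · simpa using s_mul_self s hsα hsφ i
  · have hi := s_mul_self s hsα hsφ i
    have hj := s_mul_self s hsα hsφ j
    have e : (s i * s j) ^ 3 = (s i * s j * s i) * (s j * s i * s j) := by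
      simp only [pow_succ, pow_zero, one_mul, mul_assoc]
    simp only [map_pow, map_mul, FreeGroup.lift_apply_of]
    rw [e, ← s_braid s hsα hsφ hij]
    calc s i * s j * s i * (s i * s j * s i) = s i * (s j * (s i * s i) * s j) * s i := by
          simp only [mul_assoc]
      _ = 1 := by rw [hi, mul_one, hj, mul_one, hi]

/-! ### The action of translations on the parameters -/

lemma zpow_apply (f : KP4 ≃ₐ[ℂ] KP4) {x d : KP4} (hx : f x = x + d) (hd : f d = d) (m : ℤ) :
    (f ^ m) x = x + m * d := by
  have hx' : f⁻¹ x = x - d := by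
    apply f.injective
    rw [map_sub, hx, hd, ← AlgEquiv.mul_apply, mul_inv_cancel, AlgEquiv.one_apply]; ring
  have hd' : f⁻¹ d = d := by
    apply f.injective
    rw [hd, ← AlgEquiv.mul_apply, mul_inv_cancel, AlgEquiv.one_apply]
  induction m using Int.induction_on with
  | zero => simp
  | succ n ih =>
    rw [add_comm, zpow_add, zpow_one, AlgEquiv.mul_apply, ih]
    simp only [map_add, map_mul, map_intCast, hx, hd]
    push_cast; ring
  | pred n ih =>
    rw [sub_eq_neg_add, zpow_add, zpow_neg_one, AlgEquiv.mul_apply, ih]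
    simp only [map_add, map_mul, map_intCast, hx', hd']
    push_cast; ring

set_option linter.unusedSimpArgs false in
/-- The translation `Yᵐ Zⁿ` shifts `α₁` and `α₂` by multiples of `δ = α₀ + α₁ + α₂`. -/
lemma translation_apply (s : ZMod 3 → (KP4 ≃ₐ[ℂ] KP4))
    (hsα : ∀ i j : ZMod 3, s i (αv j) = αv j - (cartanA2 i j : KP4) * αv i)
    (m n : ℤ) :
    ((s 1 * s 0 * s 1 * s 2) ^ m * (s 2 * s 0 * s 2 * s 1) ^ n) (αv 1) =
        αv 1 + (m - 2 * n : ℤ) * (αv 0 + αv 1 + αv 2) ∧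
      ((s 1 * s 0 * s 1 * s 2) ^ m * (s 2 * s 0 * s 2 * s 1) ^ n) (αv 2) =
        αv 2 + (n - 2 * m : ℤ) * (αv 0 + αv 1 + αv 2) := by
  have s00 := s_α_self s hsα 0
  have s11 := s_α_self s hsα 1
  have s22 := s_α_self s hsα 2
  have s01 := s_α_ne s hsα (i := 0) (j := 1) (by decide)
  have s02 := s_α_ne s hsα (i := 0) (j := 2) (by decide)
  have s10 := s_α_ne s hsα (i := 1) (j := 0) (by decide)
  have s12 := s_α_ne s hsα (i := 1) (j := 2) (by decide)
  have s20 := s_α_ne s hsα (i := 2) (j := 0) (by decide)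
  have s21 := s_α_ne s hsα (i := 2) (j := 1) (by decide)
  obtain ⟨δ, hδ⟩ : ∃ δ, δ = αv 0 + αv 1 + αv 2 := ⟨_, rfl⟩
  rw [← hδ]
  have Yδ : (s 1 * s 0 * s 1 * s 2) δ = δ := by
    simp only [hδ, AlgEquiv.mul_apply, map_add, map_neg, s00, s11, s22, s01, s02, s10, s12, s20,
      s21]
    ring
  have Zδ : (s 2 * s 0 * s 2 * s 1) δ = δ := by
    simp only [hδ, AlgEquiv.mul_apply, map_add, map_neg, s00, s11, s22, s01, s02, s10, s12, s20,
      s21]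
    ring
  have Y1 : (s 1 * s 0 * s 1 * s 2) (αv 1) = αv 1 + δ := by
    simp only [hδ, AlgEquiv.mul_apply, map_add, map_neg, s00, s11, s22, s01, s02, s10, s12, s20,
      s21]
    ring
  have Y2 : (s 1 * s 0 * s 1 * s 2) (αv 2) = αv 2 + -2 * δ := by
    simp only [hδ, AlgEquiv.mul_apply, map_add, map_neg, s00, s11, s22, s01, s02, s10, s12, s20,
      s21]
    ring
  have Z1 : (s 2 * s 0 * s 2 * s 1) (αv 1) = αv 1 + -2 * δ := by
    simp only [hδ, AlgEquiv.mul_apply, map_add, map_neg, s00, s11, s22, s01, s02, s10, s12, s20,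
      s21]
    ring
  have Z2 : (s 2 * s 0 * s 2 * s 1) (αv 2) = αv 2 + δ := by
    simp only [hδ, AlgEquiv.mul_apply, map_add, map_neg, s00, s11, s22, s01, s02, s10, s12, s20,
      s21]
    ring
  have hδm : ((s 1 * s 0 * s 1 * s 2) ^ m) δ = δ := by
    simpa using zpow_apply _ (x := δ) (d := 0) (by simpa using Yδ) (map_zero _) m
  have two (f : KP4 ≃ₐ[ℂ] KP4) (h : f δ = δ) : f (-2 * δ) = -2 * δ := by
    rw [map_mul, h, map_neg, map_ofNat]
  constructor
  · rw [AlgEquiv.mul_apply, zpow_apply _ Z1 (two _ Zδ), map_add, zpow_apply _ Y1 Yδ]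
    simp only [map_mul, map_intCast, map_neg, map_ofNat, hδm]
    push_cast; ring
  · rw [AlgEquiv.mul_apply, zpow_apply _ Z2 Zδ, map_add, zpow_apply _ Y2 (two _ Yδ)]
    simp only [map_mul, map_intCast, hδm]
    push_cast; ring

/-- If a translation times `w` acts trivially, where `w` maps `α₁` to `p α₁ + q α₂`, then
`w` fixes `α₁` and so does the translation. -/
lemma coeff_of_trivial (s : ZMod 3 → (KP4 ≃ₐ[ℂ] KP4))
    (hsα : ∀ i j : ZMod 3, s i (αv j) = αv j - (cartanA2 i j : KP4) * αv i)
    {m n : ℤ} {w : KP4 ≃ₐ[ℂ] KP4} (p q : ℤ)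
    (hw : w (αv 1) = p * αv 1 + q * αv 2)
    (h : (s 1 * s 0 * s 1 * s 2) ^ m * (s 2 * s 0 * s 2 * s 1) ^ n * w = 1) :
    p = 1 ∧ q = 0 ∧ m = 2 * n := by
  have h1 := DFunLike.congr_fun h (αv 1)
  obtain ⟨t1, t2⟩ := translation_apply s hsα m n
  rw [AlgEquiv.mul_apply, hw, map_add, map_mul, map_mul, map_intCast, map_intCast, t1, t2,
    AlgEquiv.one_apply] at h1
  -- `k` is the total multiple of `δ` in the image of `α₁`.
  obtain ⟨k, hk⟩ : ∃ k, k = p * (m - 2 * n) + q * (n - 2 * m) := ⟨_, rfl⟩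
  obtain ⟨h0, hp, hq⟩ := αv_independent k (p + k - 1) (q + k) (by
    rw [hk]; push_cast at h1 ⊢; linear_combination h1)
  obtain rfl : p = 1 := by omega
  obtain rfl : q = 0 := by omega
  exact ⟨rfl, rfl, by omega⟩

end WeylA2Aux

/-- the subgroup of Aut(K) generated by s₀, s₁, s₂ is isomorphic
to the affine Weyl group W(A₂⁽¹⁾), by an isomorphism matching the simple
reflections with s₀, s₁, s₂; in particular the realization is faithful. -/
theorem affine_Weyl_group_A2_faithful_realization
    (s : ZMod 3 → (KP4 ≃ₐ[ℂ] KP4))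
    (hsα : ∀ i j : ZMod 3, s i (αv j) = αv j - (cartanA2 i j : KP4) * αv i)
    (hsφ : ∀ i j : ZMod 3, s i (φv j) = φv j + (orientA2 i j : KP4) * (αv i / φv i)) :
    ∃ e : WeylA2 ≃* Subgroup.closure {s 0, s 1, s 2},
      ∀ i : ZMod 3, (e (PresentedGroup.of i) : KP4 ≃ₐ[ℂ] KP4) = s i := by
  have rels := WeylA2Aux.s_rels s hsα hsφ
  let f : WeylA2 →* (KP4 ≃ₐ[ℂ] KP4) := PresentedGroup.toGroup rels
  have hf (i : ZMod 3) : f (PresentedGroup.of i) = s i := PresentedGroup.toGroup.of rels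
  have himage : Set.range s = {s 0, s 1, s 2} := by
    ext x
    constructor
    · rintro ⟨i, rfl⟩
      have hi : i = 0 ∨ i = 1 ∨ i = 2 := by revert i; decide
      rcases hi with rfl | rfl | rfl <;> simp
    · rintro (rfl | rfl | rfl) <;> exact ⟨_, rfl⟩
  have hrange : f.range = Subgroup.closure {s 0, s 1, s 2} := by
    rw [MonoidHom.range_eq_map, ← PresentedGroup.closure_range_of, MonoidHom.map_closure,
      ← Set.range_comp, ← himage]
    exact congrArg _ (congrArg _ (funext hf))
  -- The defining relations inside the presented group, in braid form.
  have sq (i : ZMod 3) : (PresentedGroup.of i : WeylA2) * PresentedGroup.of i = 1 :=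
    PresentedGroup.one_of_mem (rels := weylA2Rels) (Or.inl ⟨i, rfl⟩)
  have braid {i j : ZMod 3} (hij : i ≠ j) :
      (PresentedGroup.of i : WeylA2) * PresentedGroup.of j * PresentedGroup.of i =
        PresentedGroup.of j * PresentedGroup.of i * PresentedGroup.of j := by
    have h : ((PresentedGroup.of i : WeylA2) * PresentedGroup.of j) ^ 3 = 1 :=
      PresentedGroup.one_of_mem (rels := weylA2Rels) (Or.inr ⟨i, j, hij, rfl⟩)
    have hi := inv_eq_of_mul_eq_one_left (sq i)
    have hj := inv_eq_of_mul_eq_one_left (sq j)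
    have h' : ((PresentedGroup.of i : WeylA2) * PresentedGroup.of j * PresentedGroup.of i) *
        (PresentedGroup.of j * PresentedGroup.of i * PresentedGroup.of j) = 1 := by
      simpa only [pow_succ, pow_zero, one_mul, mul_assoc] using h
    rw [eq_inv_of_mul_eq_one_left h']
    simp only [mul_inv_rev, hi, hj, mul_assoc]
  have htop : Subgroup.closure {(PresentedGroup.of 0 : WeylA2), PresentedGroup.of 1,
      PresentedGroup.of 2} = ⊤ := by
    rw [eq_top_iff, ← PresentedGroup.closure_range_of]
    apply Subgroup.closure_mono
    rintro _ ⟨i, rfl⟩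
    have hi : i = 0 ∨ i = 1 ∨ i = 2 := by revert i; decide
    rcases hi with rfl | rfl | rfl <;> simp
  have hinj : Function.Injective f := by
    rw [injective_iff_map_eq_one]
    intro g hg
    obtain ⟨m, n, w, hw, rfl⟩ := WeylA2Aux.normal_form _ _ _ (sq 0) (sq 1) (sq 2)
      (braid (by decide)) (braid (by decide)) (braid (by decide)) htop g
    simp only [map_mul, map_zpow, hf] at hg
    have s11 := WeylA2Aux.s_α_self s hsα 1
    have s22 := WeylA2Aux.s_α_self s hsα 2
    have s12 := WeylA2Aux.s_α_ne s hsα (i := 1) (j := 2) (by decide)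
    have s21 := WeylA2Aux.s_α_ne s hsα (i := 2) (j := 1) (by decide)
    have key := fun p q h => WeylA2Aux.coeff_of_trivial s hsα p q h hg
    rcases hw with rfl | rfl | rfl | rfl | rfl | rfl
    · have hm := (key 1 0 (by simp)).2.2
      have h2 := DFunLike.congr_fun hg (αv 2)
      rw [map_one, mul_one, (WeylA2Aux.translation_apply s hsα m n).2, AlgEquiv.one_apply] at h2
      have hn := (WeylA2Aux.αv_independent (n - 2 * m) (n - 2 * m) (n - 2 * m)
        (by linear_combination h2)).1
      obtain rfl : n = 0 := by omega
      obtain rfl : m = 0 := by omega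
      simp
    · have := key (-1) 0 (by simp [hf, s11]); omega
    · have := key 1 1 (by simp [hf, s21]); omega
    · have := key 0 1 (by simp [hf, s11, s12, s21]); omega
    · have := key (-1) (-1) (by simp [hf, s11, s21]; ring); omega
    · have := key 0 (-1) (by simp [hf, s11, s12, s21]); omega
  refine ⟨(MonoidHom.ofInjective hinj).trans (MulEquiv.subgroupCongr hrange), fun i => ?_⟩
  exact hf i

end
end

section
/- The assignments sᵢ(aⱼ) = aⱼ·aᵢ^(−aᵢⱼ), sᵢ(fⱼ) = fⱼ·((aᵢ + fᵢ)/(1 + aᵢfᵢ))^(uᵢⱼ) (for i,j ∈ {0,1,2}) and π(aⱼ) = a_{j+1}, π(fⱼ) = f_{j+1} extend to field automorphisms s₀, s₁, s₂, π of L = ℂ(a₀,a₁,a₂,f₀,f₁,f₂), and these automorphisms satisfy the fundamental relations of the extended affine Weyl group of type A₂⁽¹⁾: sᵢ² = 1, (sᵢs_{i+1})³ = 1, and πsᵢ = s_{i+1}π for all i ∈ {0,1,2} (indices read modulo 3). Moreover each sᵢ and π fixes the element q = a₀a₁a₂. -/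
/-!
Multiplicative (q-difference) analogue of the birational realization of the
extended affine Weyl group of type A₂⁽¹⁾, underlying the fourth q-Painlevé
equation.  L = ℂ(a₀,a₁,a₂,f₀,f₁,f₂) is the fraction field of the polynomial
ring in six variables indexed by `ZMod 3 ⊕ ZMod 3` (`Sum.inl j` ↦ aⱼ,
`Sum.inr j` ↦ fⱼ).
-/

open MvPolynomial

noncomputable section

abbrev PolyQ := MvPolynomial (ZMod 3 ⊕ ZMod 3) ℂ

abbrev LQ := FractionRing PolyQ

/-- The multiplicative root parameters a₀, a₁, a₂. -/
def av (j : ZMod 3) : LQ := algebraMap PolyQ LQ (X (Sum.inl j))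

/-- The dependent variables f₀, f₁, f₂. -/
def fv (j : ZMod 3) : LQ := algebraMap PolyQ LQ (X (Sum.inr j))

/-!
An assignment of the six variables to six elements of `L` extends to an automorphism of `L`
as soon as those six elements generate `L` as a field: since `L` has transcendence degree 6,
six generators are algebraically independent, so the evaluation map on polynomials is injective
and extends to `L`, and its image is a subfield containing the generators
(`exists_algEquiv_of_adjoin_eq_top`). For `sᵢ` the images generate because
`aᵢ`, `fᵢ`, hence the factor `(aᵢ + fᵢ)/(1 + aᵢfᵢ)`, and then every other variable can be
recovered from them; for `π` the images are a permutation of the variables.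

Automorphisms agree if they agree on the variables (`algEquiv_ext`), so each relation is a finite
list of identities between rational functions. The relation `(sᵢsᵢ₊₁)³ = 1` is deduced from
`sᵢ² = 1` and the braid relation `sᵢsᵢ₊₁sᵢ = sᵢ₊₁sᵢsᵢ₊₁`, which keeps the rational functions small
(`braid_of_values`). All denominators that occur are polynomials with positive coefficients, so
they are nonzero because their value at `(1, …, 1)` is (`algebraMap_ne_zero_of_eval_one`).
-/

lemma adjoin_X_eq_top :
    IntermediateField.adjoin ℂ
      (Set.range fun k : ZMod 3 ⊕ ZMod 3 => algebraMap PolyQ LQ (X k)) = ⊤ := by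
  rw [eq_top_iff]
  rintro x -
  have hp : ∀ p : PolyQ, algebraMap PolyQ LQ p ∈ IntermediateField.adjoin ℂ
      (Set.range fun k : ZMod 3 ⊕ ZMod 3 => algebraMap PolyQ LQ (X k)) := by
    intro p
    induction p using MvPolynomial.induction_on with
    | C r =>
      have h : algebraMap PolyQ LQ (C r) = algebraMap ℂ LQ r := by
        rw [IsScalarTower.algebraMap_apply ℂ PolyQ LQ, MvPolynomial.algebraMap_eq]
      rw [h]
      exact IntermediateField.algebraMap_mem _ r
    | add p q hp hq => rw [map_add]; exact add_mem hp hq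
    | mul_X p k hp =>
      rw [map_mul]
      exact mul_mem hp (IntermediateField.subset_adjoin _ _ ⟨k, rfl⟩)
  obtain ⟨p, q, -, rfl⟩ := IsFractionRing.div_surjective (A := PolyQ) x
  exact div_mem (hp p) (hp q)

/-- Six elements generating `L` as a field are the images of the six variables under an
automorphism of `L`. -/
lemma exists_algEquiv_of_adjoin_eq_top (g : ZMod 3 ⊕ ZMod 3 → LQ)
    (hg : IntermediateField.adjoin ℂ (Set.range g) = ⊤) :
    ∃ e : LQ ≃ₐ[ℂ] LQ, ∀ k, e (algebraMap PolyQ LQ (X k)) = g k := by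
  have halg : Algebra.IsAlgebraic (Algebra.adjoin ℂ (Set.range g)) LQ := by
    refine ⟨fun x => ?_⟩
    have hx : x ∈ IntermediateField.adjoin ℂ (Set.range g) := hg ▸ IntermediateField.mem_top
    obtain ⟨y, hy, z, hz, rfl⟩ := IntermediateField.mem_adjoin_iff_div.1 hx
    rw [div_eq_mul_inv]
    exact (isAlgebraic_algebraMap (⟨y, hy⟩ : Algebra.adjoin ℂ (Set.range g))).mul
      (isAlgebraic_algebraMap (⟨z, hz⟩ : Algebra.adjoin ℂ (Set.range g))).inv
  have htr : Cardinal.mk (ZMod 3 ⊕ ZMod 3) ≤ Algebra.trdeg ℂ LQ := by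
    have h := (algebraicIndependent_X (ZMod 3 ⊕ ZMod 3) ℂ).map'
      (f := IsScalarTower.toAlgHom ℂ PolyQ LQ) (IsFractionRing.injective PolyQ LQ)
    exact h.cardinalMk_le_trdeg
  have hind := (Algebra.IsAlgebraic.isTranscendenceBasis_of_le_trdeg_of_finite ℂ g htr).1
  have hinj : Function.Injective (aeval g : PolyQ →ₐ[ℂ] LQ) := hind
  let φ : LQ →ₐ[ℂ] LQ := IsFractionRing.liftAlgHom hinj
  have hφ : ∀ k, φ (algebraMap PolyQ LQ (X k)) = g k := by
    intro k
    simp [φ]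
  have hsurj : Function.Surjective φ := by
    rw [← AlgHom.fieldRange_eq_top, eq_top_iff, ← hg, IntermediateField.adjoin_le_iff]
    rintro _ ⟨k, rfl⟩
    exact ⟨_, hφ k⟩
  exact ⟨AlgEquiv.ofBijective φ ⟨φ.toRingHom.injective, hsurj⟩, hφ⟩

lemma algEquiv_ext {e₁ e₂ : LQ ≃ₐ[ℂ] LQ} (ha : ∀ j, e₁ (av j) = e₂ (av j))
    (hf : ∀ j, e₁ (fv j) = e₂ (fv j)) : e₁ = e₂ := by
  have h : (e₁ : LQ →ₐ[ℂ] LQ) = e₂ := by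
    apply IsLocalization.algHom_ext (nonZeroDivisors PolyQ)
    apply MvPolynomial.algHom_ext
    rintro (j | j)
    · exact ha j
    · exact hf j
  exact AlgEquiv.ext fun x => DFunLike.congr_fun h x

lemma algebraMap_ne_zero_of_eval_one (p : PolyQ) (h : eval (fun _ => (1 : ℂ)) p ≠ 0) :
    algebraMap PolyQ LQ p ≠ 0 := by
  intro h0
  rw [(IsFractionRing.injective PolyQ LQ).eq_iff' (map_zero _)] at h0
  exact h (by rw [h0, map_zero])

lemma av_ne_zero (i : ZMod 3) : av i ≠ 0 :=
  algebraMap_ne_zero_of_eval_one (X (Sum.inl i)) (by simp)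

lemma fv_ne_zero (i : ZMod 3) : fv i ≠ 0 :=
  algebraMap_ne_zero_of_eval_one (X (Sum.inr i)) (by simp)

lemma av_add_fv_ne_zero (i : ZMod 3) : av i + fv i ≠ 0 := by
  have := algebraMap_ne_zero_of_eval_one (X (Sum.inl i) + X (Sum.inr i)) (by norm_num)
  simpa [av, fv] using this

lemma one_add_av_mul_fv_ne_zero (i : ZMod 3) : 1 + av i * fv i ≠ 0 := by
  have := algebraMap_ne_zero_of_eval_one (1 + X (Sum.inl i) * X (Sum.inr i)) (by norm_num)
  simpa [av, fv] using this

lemma exists_pi : ∃ π : LQ ≃ₐ[ℂ] LQ,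
    (∀ j, π (av j) = av (j + 1)) ∧ ∀ j, π (fv j) = fv (j + 1) := by
  obtain ⟨π, hπ⟩ := exists_algEquiv_of_adjoin_eq_top
    (Sum.elim (fun j => av (j + 1)) fun j => fv (j + 1)) (by
      rw [← adjoin_X_eq_top]
      congr 1
      ext x
      constructor
      · rintro ⟨j | j, rfl⟩
        · exact ⟨Sum.inl (j + 1), rfl⟩
        · exact ⟨Sum.inr (j + 1), rfl⟩
      · rintro ⟨j | j, rfl⟩
        · exact ⟨Sum.inl (j - 1), by simp [av]⟩
        · exact ⟨Sum.inr (j - 1), by simp [fv]⟩)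
  exact ⟨π, fun j => hπ (Sum.inl j), fun j => hπ (Sum.inr j)⟩

lemma exists_s (i : ZMod 3) : ∃ s : LQ ≃ₐ[ℂ] LQ,
    (∀ j, s (av j) = av j * av i ^ (-(cartanA2 i j))) ∧
    ∀ j, s (fv j) = fv j * ((av i + fv i) / (1 + av i * fv i)) ^ (orientA2 i j) := by
  let g : ZMod 3 ⊕ ZMod 3 → LQ :=
    Sum.elim (fun j => av j * av i ^ (-(cartanA2 i j)))
      fun j => fv j * ((av i + fv i) / (1 + av i * fv i)) ^ (orientA2 i j)
  have hgen : IntermediateField.adjoin ℂ (Set.range g) = ⊤ := by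
    set F := IntermediateField.adjoin ℂ (Set.range g) with hF
    have hmem : ∀ k, g k ∈ F := fun k => IntermediateField.subset_adjoin _ _ ⟨k, rfl⟩
    have hai : av i ∈ F := by
      have h : av i = (g (Sum.inl i))⁻¹ := by
        have := av_ne_zero i
        simp only [g, Sum.elim_inl, cartanA2, if_true]
        field_simp
      rw [h]
      exact inv_mem (hmem _)
    have hfi : fv i ∈ F := by
      have h : fv i = g (Sum.inr i) := by simp [g, orientA2]
      rw [h]
      exact hmem _
    have hR : (av i + fv i) / (1 + av i * fv i) ∈ F :=
      div_mem (add_mem hai hfi) (add_mem (one_mem _) (mul_mem hai hfi))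
    rw [eq_top_iff, ← adjoin_X_eq_top, IntermediateField.adjoin_le_iff]
    rintro _ ⟨j | j, rfl⟩
    · have h : av j = g (Sum.inl j) * av i ^ (cartanA2 i j) := by
        simp only [g, Sum.elim_inl]
        rw [mul_assoc, ← zpow_add₀ (av_ne_zero i)]
        simp
      change av j ∈ F
      rw [h]
      exact mul_mem (hmem _) (zpow_mem hai _)
    · have h : fv j =
          g (Sum.inr j) * ((av i + fv i) / (1 + av i * fv i)) ^ (-(orientA2 i j)) := by
        simp only [g, Sum.elim_inr]
        rw [mul_assoc, ← zpow_add₀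
          (div_ne_zero (av_add_fv_ne_zero i) (one_add_av_mul_fv_ne_zero i))]
        simp
      change fv j ∈ F
      rw [h]
      exact mul_mem (hmem _) (zpow_mem hR _)
  obtain ⟨s, hs⟩ := exists_algEquiv_of_adjoin_eq_top g hgen
  exact ⟨s, fun j => hs (Sum.inl j), fun j => hs (Sum.inr j)⟩

lemma forall_shift (i : ZMod 3) {P : ZMod 3 → Prop} (h0 : P i) (h1 : P (i + 1))
    (h2 : P (i + 2)) : ∀ j, P j := by
  intro j
  have : j = i ∨ j = i + 1 ∨ j = i + 2 := by
    clear h0 h1 h2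
    revert i j
    decide
  rcases this with rfl | rfl | rfl <;> assumption

/-- The braid relation for two automorphisms given by the formulas of `sᵢ` and `sᵢ₊₁`, where
`a, b, c` stand for `aᵢ, aᵢ₊₁, aᵢ₊₂` and `x, y, z` for `fᵢ, fᵢ₊₁, fᵢ₊₂`. -/
lemma braid_of_values {K : Type*} [Field K] [Algebra ℂ K] (S T : K ≃ₐ[ℂ] K) (a b c x y z : K)
    (ha : a ≠ 0) (hb : b ≠ 0) (h1 : a + x ≠ 0) (h2 : 1 + a * x ≠ 0) (h3 : b + y ≠ 0)
    (h4 : 1 + b * y ≠ 0)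
    (h5 : 1 + a * x + a * b * y * (a + x) ≠ 0) (h6 : a * b * (1 + a * x) + y * (a + x) ≠ 0)
    (h7 : a * b * (b + y) + x * (1 + b * y) ≠ 0) (h8 : b + y + a * b * x * (1 + b * y) ≠ 0)
    (Sa : S a = a⁻¹) (Sb : S b = b * a) (Sc : S c = c * a) (Sx : S x = x)
    (Sy : S y = y * ((a + x) / (1 + a * x))) (Sz : S z = z * ((a + x) / (1 + a * x))⁻¹)
    (Tb : T b = b⁻¹) (Tc : T c = c * b) (Ta : T a = a * b) (Ty : T y = y)
    (Tz : T z = z * ((b + y) / (1 + b * y))) (Tx : T x = x * ((b + y) / (1 + b * y))⁻¹) :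
    (S (T (S a)) = T (S (T a)) ∧ S (T (S b)) = T (S (T b)) ∧ S (T (S c)) = T (S (T c))) ∧
    S (T (S x)) = T (S (T x)) ∧ S (T (S y)) = T (S (T y)) ∧ S (T (S z)) = T (S (T z)) := by
  -- `S` acts on the numerator and denominator of `(b + y)/(1 + by)`, and `T` on those of
  -- `(a + x)/(1 + ax)`; one more application only multiplies the results by simple factors.
  have S3 : S (b + y) = (a * b * (1 + a * x) + y * (a + x)) / (1 + a * x) := by
    rw [map_add, Sb, Sy]; field_simp
  have S4 : S (1 + b * y) = (1 + a * x + a * b * y * (a + x)) / (1 + a * x) := by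
    rw [map_add, map_mul, map_one, Sb, Sy]; field_simp
  have T1 : T (a + x) = (a * b * (b + y) + x * (1 + b * y)) / (b + y) := by
    rw [map_add, Ta, Tx]; field_simp
  have T2 : T (1 + a * x) = (b + y + a * b * x * (1 + b * y)) / (b + y) := by
    rw [map_add, map_mul, map_one, Ta, Tx]; field_simp
  have S7 : S (a * b * (b + y) + x * (1 + b * y)) = a * b * (b + y) + x * (1 + b * y) := by
    rw [map_add, map_mul, map_mul, map_mul, S3, S4, Sa, Sb, Sx]; field_simp; ring
  have S8 : S (b + y + a * b * x * (1 + b * y)) =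
      (b + y + a * b * x * (1 + b * y)) * ((a + x) / (1 + a * x)) := by
    rw [map_add, map_mul, map_mul, map_mul, S3, S4, Sa, Sb, Sx]; field_simp; ring
  have T5 : T (1 + a * x + a * b * y * (a + x)) =
      1 + a * x + a * b * y * (a + x) := by
    rw [map_add, map_mul, map_mul, map_mul, T1, T2, Ta, Tb, Ty]; field_simp; ring
  have T6 : T (a * b * (1 + a * x) + y * (a + x)) =
      (a * b * (1 + a * x) + y * (a + x)) * ((1 + b * y) / (b + y)) := by
    rw [map_add, map_mul, map_mul, map_mul, T1, T2, Ta, Tb, Ty]; field_simp; ring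
  -- From here on these polynomials only matter as nonzero elements, so they become atoms.
  generalize 1 + a * x + a * b * y * (a + x) = p₅ at h5 S4 T5
  generalize a * b * (1 + a * x) + y * (a + x) = p₆ at h6 S3 T6
  generalize a * b * (b + y) + x * (1 + b * y) = p₇ at h7 T1 S7
  generalize b + y + a * b * x * (1 + b * y) = p₈ at h8 T2 S8
  generalize a + x = p₁ at h1 T1 Sy Sz S8
  generalize 1 + a * x = p₂ at h2 T2 Sy Sz S3 S4 S8
  generalize b + y = p₃ at h3 S3 Tx Tz T1 T2 T6
  generalize 1 + b * y = p₄ at h4 S4 Tx Tz T6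
  refine ⟨⟨?_, ?_, ?_⟩, ?_, ?_, ?_⟩
  · simp only [Sa, Sb, Ta, Tb, map_mul, map_inv₀]; field_simp
  · simp only [Sa, Sb, Ta, Tb, map_mul, map_inv₀]; field_simp
  · simp only [Sa, Sb, Sc, Ta, Tb, Tc, map_mul]; field_simp
  · simp only [Sx, Tx, map_mul, map_div₀, map_inv₀, S3, S4, T2, T5, T6]; field_simp
  · simp only [Sy, Ty, map_mul, map_div₀, T1, T2, S3, S7, S8]; field_simp
  · simp only [Sz, Tz, map_mul, map_div₀, map_inv₀, S3, S4, T1, T2, S7, S8, T5, T6]; field_simp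

/-- the assignments sᵢ(aⱼ) = aⱼ·aᵢ^(−aᵢⱼ),
sᵢ(fⱼ) = fⱼ·((aᵢ+fᵢ)/(1+aᵢfᵢ))^(uᵢⱼ), π(aⱼ) = a_{j+1}, π(fⱼ) = f_{j+1}
extend to automorphisms of L = ℂ(a₀,a₁,a₂,f₀,f₁,f₂) satisfying the
fundamental relations sᵢ² = 1, (sᵢs_{i+1})³ = 1, πsᵢ = s_{i+1}π of the
extended affine Weyl group of type A₂⁽¹⁾, and each of them fixes
q = a₀a₁a₂. -/
theorem extended_affine_Weyl_A2_multiplicative_realization :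
    ∃ (s : ZMod 3 → (LQ ≃ₐ[ℂ] LQ)) (π : LQ ≃ₐ[ℂ] LQ),
      (∀ i j : ZMod 3, s i (av j) = av j * av i ^ (-(cartanA2 i j))) ∧
      (∀ i j : ZMod 3,
        s i (fv j) = fv j * ((av i + fv i) / (1 + av i * fv i)) ^ (orientA2 i j)) ∧
      (∀ j : ZMod 3, π (av j) = av (j + 1)) ∧
      (∀ j : ZMod 3, π (fv j) = fv (j + 1)) ∧
      (∀ i : ZMod 3, s i * s i = 1) ∧
      (∀ i : ZMod 3, (s i * s (i + 1)) ^ 3 = 1) ∧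
      (∀ i : ZMod 3, π * s i = s (i + 1) * π) ∧
      (∀ i : ZMod 3, s i (av 0 * av 1 * av 2) = av 0 * av 1 * av 2) ∧
      π (av 0 * av 1 * av 2) = av 0 * av 1 * av 2 := by
  choose s hsa hsf using exists_s
  obtain ⟨π, hπa, hπf⟩ := exists_pi
  have hd : ∀ i : ZMod 3, i + 1 ≠ i ∧ i + 2 ≠ i ∧ i + 2 ≠ i + 1 ∧ i + 1 + 1 = i + 2 ∧
      i + 2 + 1 = i ∧ i + 1 + 2 = i := by decide
  -- The values of `s i` on the variables of index `i`, `i + 1`, `i + 2`.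
  have a0 : ∀ i, s i (av i) = (av i)⁻¹ := by
    intro i
    have := av_ne_zero i
    rw [hsa, cartanA2, if_pos rfl]
    field_simp
  have a1 : ∀ i, s i (av (i + 1)) = av (i + 1) * av i := by
    intro i
    rw [hsa, cartanA2, if_neg (hd i).1.symm]
    simp
  have a2 : ∀ i, s i (av (i + 2)) = av (i + 2) * av i := by
    intro i
    rw [hsa, cartanA2, if_neg (hd i).2.1.symm]
    simp
  have f0 : ∀ i, s i (fv i) = fv i := by
    intro i
    rw [hsf, orientA2, if_pos rfl]
    simp
  have f1 : ∀ i, s i (fv (i + 1)) =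
      fv (i + 1) * ((av i + fv i) / (1 + av i * fv i)) := by
    intro i
    rw [hsf, orientA2, if_neg (hd i).1, if_pos rfl]
    simp
  have f2 : ∀ i, s i (fv (i + 2)) =
      fv (i + 2) * ((av i + fv i) / (1 + av i * fv i))⁻¹ := by
    intro i
    rw [hsf, orientA2, if_neg (hd i).2.1, if_neg (hd i).2.2.1]
    simp
  have hinv : ∀ i, s i * s i = 1 := by
    intro i
    have ha := av_ne_zero i
    have h1 := av_add_fv_ne_zero i
    have h2 := one_add_av_mul_fv_ne_zero i
    -- `aᵢ ↦ aᵢ⁻¹` inverts the factor `(aᵢ + fᵢ)/(1 + aᵢfᵢ)`.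
    have hR : s i ((av i + fv i) / (1 + av i * fv i)) =
        ((av i + fv i) / (1 + av i * fv i))⁻¹ := by
      have h4 : 1 + (av i)⁻¹ * fv i ≠ 0 := by
        have : 1 + (av i)⁻¹ * fv i = (av i + fv i) / av i := by field_simp
        rw [this]
        exact div_ne_zero h1 ha
      rw [map_div₀, map_add, map_add, map_mul, map_one, a0, f0, inv_div,
        div_eq_div_iff h4 h1]
      field_simp
    apply algEquiv_ext <;> refine forall_shift i ?_ ?_ ?_ <;>
      simp only [AlgEquiv.mul_apply, AlgEquiv.one_apply]
    · simp only [a0, map_inv₀, inv_inv]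
    · simp only [a0, a1, map_mul]; field_simp
    · simp only [a0, a2, map_mul]; field_simp
    · simp only [f0]
    · rw [f1, map_mul, f1, hR]; field_simp
    · rw [f2, map_mul, f2, map_inv₀, hR]; field_simp
  have hbraid : ∀ i, s i * s (i + 1) * s i = s (i + 1) * s i * s (i + 1) := by
    intro i
    obtain ⟨-, -, -, e1, e2, e3⟩ := hd i
    have h5 := algebraMap_ne_zero_of_eval_one (1 + X (.inl i) * X (.inr i) +
      X (.inl i) * X (.inl (i + 1)) * X (.inr (i + 1)) * (X (.inl i) + X (.inr i)))
      (by norm_num)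
    have h6 := algebraMap_ne_zero_of_eval_one (X (.inl i) * X (.inl (i + 1)) *
      (1 + X (.inl i) * X (.inr i)) + X (.inr (i + 1)) * (X (.inl i) + X (.inr i)))
      (by norm_num)
    have h7 := algebraMap_ne_zero_of_eval_one (X (.inl i) * X (.inl (i + 1)) *
      (X (.inl (i + 1)) + X (.inr (i + 1))) +
        X (.inr i) * (1 + X (.inl (i + 1)) * X (.inr (i + 1)))) (by norm_num)
    have h8 := algebraMap_ne_zero_of_eval_one (X (.inl (i + 1)) + X (.inr (i + 1)) +
      X (.inl i) * X (.inl (i + 1)) * X (.inr i) *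
        (1 + X (.inl (i + 1)) * X (.inr (i + 1)))) (by norm_num)
    simp only [map_add, map_mul, map_one] at h5 h6 h7 h8
    have b1 := a1 (i + 1)
    have b2 := a2 (i + 1)
    have g1 := f1 (i + 1)
    have g2 := f2 (i + 1)
    rw [e1] at b1 g1
    rw [e3] at b2 g2
    obtain ⟨⟨A0, A1, A2⟩, F0, F1, F2⟩ := braid_of_values (s i) (s (i + 1)) (av i) (av (i + 1))
      (av (i + 2)) (fv i) (fv (i + 1)) (fv (i + 2)) (av_ne_zero _) (av_ne_zero _)
      (av_add_fv_ne_zero _) (one_add_av_mul_fv_ne_zero _)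
      (av_add_fv_ne_zero _) (one_add_av_mul_fv_ne_zero _) h5 h6 h7 h8
      (a0 i) (a1 i) (a2 i) (f0 i) (f1 i) (f2 i) (a0 _) b1 b2 (f0 _) g1 g2
    exact algEquiv_ext (forall_shift i A0 A1 A2) (forall_shift i F0 F1 F2)
  refine ⟨s, π, hsa, hsf, hπa, hπf, hinv, ?_, ?_, ?_, ?_⟩
  · intro i
    calc (s i * s (i + 1)) ^ 3
        = (s i * s (i + 1) * s i) * (s (i + 1) * s i * s (i + 1)) := by
          simp only [pow_succ, pow_zero, one_mul, mul_assoc]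
      _ = (s i * s (i + 1) * s i) * (s i * s (i + 1) * s i) := by rw [hbraid]
      _ = s i * (s (i + 1) * (s i * s i) * s (i + 1)) * s i := by simp only [mul_assoc]
      _ = 1 := by rw [hinv, mul_one, hinv, mul_one, hinv]
  · intro i
    have hc : ∀ i j, cartanA2 (i + 1) (j + 1) = cartanA2 i j := by decide
    have hu : ∀ i j, orientA2 (i + 1) (j + 1) = orientA2 i j := by decide
    apply algEquiv_ext <;> intro j
    · simp only [AlgEquiv.mul_apply, hsa, hπa, map_mul, map_zpow₀, hc]
    · simp only [AlgEquiv.mul_apply, hsf, hπf, hπa, map_mul, map_zpow₀, map_div₀, map_add,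
        map_one, hu]
  · intro i
    have hq : av 0 * av 1 * av 2 = av i * av (i + 1) * av (i + 2) := by
      have : i = 0 ∨ i = 1 ∨ i = 2 := by
        revert i
        decide
      rcases this with rfl | rfl | rfl
      · simp
      · rw [show (1 : ZMod 3) + 1 = 2 by decide, show (1 : ZMod 3) + 2 = 0 by decide]
        ring
      · rw [show (2 : ZMod 3) + 1 = 0 by decide, show (2 : ZMod 3) + 2 = 1 by decide]
        ring
    have := av_ne_zero i
    rw [hq, map_mul, map_mul, a0, a1, a2]
    field_simp
  · rw [map_mul, map_mul, hπa, hπa, hπa, show (0 : ZMod 3) + 1 = 1 by decide,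
      show (1 : ZMod 3) + 1 = 2 by decide, show (2 : ZMod 3) + 1 = 0 by decide]
    ring

end
end

section
/- The assignment T(aⱼ) = aⱼ and T(fⱼ) = aⱼa_{j+1}f_{j+1}·(1 + a_{j+2}f_{j+2} + a_{j+2}aⱼf_{j+2}fⱼ)/(1 + aⱼfⱼ + aⱼa_{j+1}fⱼf_{j+1}) for j ∈ {0,1,2} (indices modulo 3) extends to a field automorphism T of L = ℂ(a₀,a₁,a₂,f₀,f₁,f₂), and T commutes with each of the automorphisms s₀, s₁, s₂ and π: T ∘ sᵢ = sᵢ ∘ T and T ∘ π = π ∘ T. In other words, the extended affine Weyl group of type A₂⁽¹⁾ acts on the fourth q-Painlevé equation qP_IV as a group of Bäcklund transformations. -/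
/-!
Put `Dⱼ = 1 + aⱼfⱼ + aⱼaⱼ₊₁fⱼfⱼ₊₁`, so that `T(fⱼ) = aⱼaⱼ₊₁fⱼ₊₁ Dⱼ₊₂/Dⱼ`.

*`T` is an automorphism.* With `yⱼ = T(fⱼ)/aⱼ` one has `1 + yⱼ₊₂ + yⱼ₊₁yⱼ₊₂ = Dⱼ` (`qG_qT`).
Hence the `Dⱼ`, and then the `fⱼ`, are rational in the `T(fⱼ)`, which gives an explicit inverse
substitution (`qTinv_qT`, `qT_qTinv`). The existence of a formal inverse makes the substitution
`T` injective on polynomials (`injective_of_formal_inverse`), so it extends to the function field,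
and the extension is onto because its range contains all generators. All denominators involved are
subtraction-free, hence nonzero (`PosRat`).

*`T` commutes with `sᵢ`.* Let `r = (aᵢ + fᵢ)/(1 + aᵢfᵢ)`. Then `sᵢ(Dᵢ) = (r/aᵢ) Dᵢ`,
`sᵢ(Dᵢ₊₂) = Dᵢ₊₂` and `T(r) = aᵢ Dᵢ₊₁/sᵢ(Dᵢ₊₁)`; with these three identities both composites are
seen to agree on every `fⱼ` (`IsReflected.qT`). Commutation with `π` is the cyclic symmetry of the
formula for `T`.
-/

/-!
The discrete time evolution T of the fourth q-Painlevé equation qP_IV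
commutes with the multiplicative realization of the extended affine Weyl
group of type A₂⁽¹⁾; i.e. W̃(A₂⁽¹⁾) acts on qP_IV as a group of Bäcklund
transformations.
-/

open MvPolynomial

noncomputable section

/-- Elements of `LQ` that are quotients of polynomials taking positive real values at the point
where all six variables equal `1`. This class contains every subtraction-free expression in the
`aⱼ` and `fⱼ`, and serves to show that such expressions do not vanish. -/
def PosRat (x : LQ) : Prop :=
  ∃ (p q : PolyQ) (r t : ℝ), 0 < r ∧ 0 < t ∧ eval (fun _ => (1 : ℂ)) p = r ∧
    eval (fun _ => (1 : ℂ)) q = t ∧ x * algebraMap PolyQ LQ q = algebraMap PolyQ LQ p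

lemma algebraMap_ne_zero_of_eval {p : PolyQ} {r : ℝ} (hr : 0 < r)
    (h : eval (fun _ => (1 : ℂ)) p = r) : algebraMap PolyQ LQ p ≠ 0 := by
  intro h0
  have hp : p = 0 := (map_eq_zero_iff _ (IsFractionRing.injective PolyQ LQ)).1 h0
  rw [hp, map_zero] at h
  exact hr.ne' (by exact_mod_cast h.symm)

lemma PosRat.ne_zero {x : LQ} (hx : PosRat x) : x ≠ 0 := by
  obtain ⟨p, q, r, t, hr, ht, hp, hq, h⟩ := hx
  rintro rfl
  rw [zero_mul] at h
  exact algebraMap_ne_zero_of_eval hr hp h.symm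

lemma PosRat.of_poly (p : PolyQ) (hp : eval (fun _ => (1 : ℂ)) p = 1) :
    PosRat (algebraMap PolyQ LQ p) :=
  ⟨p, 1, 1, 1, one_pos, one_pos, by simp [hp], by simp, by simp⟩

lemma PosRat.one : PosRat 1 := by simpa using PosRat.of_poly 1 (by simp)

lemma PosRat.av (j : ZMod 3) : PosRat (av j) := PosRat.of_poly _ (by simp)

lemma PosRat.fv (j : ZMod 3) : PosRat (fv j) := PosRat.of_poly _ (by simp)

lemma PosRat.add {x y : LQ} (hx : PosRat x) (hy : PosRat y) : PosRat (x + y) := by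
  obtain ⟨p, q, r, t, hr, ht, hp, hq, h⟩ := hx
  obtain ⟨p', q', r', t', hr', ht', hp', hq', h'⟩ := hy
  refine ⟨p * q' + p' * q, q * q', r * t' + r' * t, t * t', by positivity, by positivity,
    by simp [hp, hq, hp', hq'], by simp [hq, hq'], ?_⟩
  simp only [map_mul, map_add, ← h, ← h']
  ring

lemma PosRat.mul {x y : LQ} (hx : PosRat x) (hy : PosRat y) : PosRat (x * y) := by
  obtain ⟨p, q, r, t, hr, ht, hp, hq, h⟩ := hx
  obtain ⟨p', q', r', t', hr', ht', hp', hq', h'⟩ := hy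
  refine ⟨p * p', q * q', r * r', t * t', by positivity, by positivity,
    by simp [hp, hp'], by simp [hq, hq'], ?_⟩
  simp only [map_mul, ← h, ← h']
  ring

lemma PosRat.inv {x : LQ} (hx : PosRat x) : PosRat x⁻¹ := by
  have hx0 := hx.ne_zero
  obtain ⟨p, q, r, t, hr, ht, hp, hq, h⟩ := hx
  refine ⟨q, p, t, r, ht, hr, hq, hp, ?_⟩
  rw [← h, inv_mul_cancel_left₀ hx0]

lemma PosRat.div {x y : LQ} (hx : PosRat x) (hy : PosRat y) : PosRat (x / y) := by
  rw [div_eq_mul_inv]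
  exact hx.mul hy.inv

/-- `Dⱼ = 1 + aⱼfⱼ + aⱼaⱼ₊₁fⱼfⱼ₊₁`, the denominator of `T(fⱼ)`. -/
def qD {R : Type*} [CommRing R] (a f : ZMod 3 → R) (j : ZMod 3) : R :=
  1 + a j * f j + a j * a (j + 1) * f j * f (j + 1)

/-- `T(fⱼ) = aⱼ aⱼ₊₁ fⱼ₊₁ Dⱼ₊₂ / Dⱼ`. -/
def qT {K : Type*} [Field K] (a f : ZMod 3 → K) (j : ZMod 3) : K :=
  a j * a (j + 1) * f (j + 1) * qD a f (j + 2) / qD a f j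

/-- `Gⱼ = aⱼ₊₁aⱼ₊₂ + aⱼ₊₁fⱼ₊₂ + fⱼ₊₁fⱼ₊₂`; up to the factor `aⱼ₊₁aⱼ₊₂`, this is the expression of
`Dⱼ` through the images `T(fⱼ)`. -/
def qG {R : Type*} [CommRing R] (a f : ZMod 3 → R) (j : ZMod 3) : R :=
  a (j + 1) * a (j + 2) + a (j + 1) * f (j + 2) + f (j + 1) * f (j + 2)

/-- The inverse evolution
`T⁻¹(fⱼ) = fⱼ₊₂ / (aⱼ aⱼ₊₂) · (Gⱼ₊₂ / (aⱼaⱼ₊₁)) / (Gⱼ₊₁ / (aⱼ₊₂aⱼ))`. -/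
def qTinv {K : Type*} [Field K] (a f : ZMod 3 → K) (j : ZMod 3) : K :=
  f (j + 2) * qG a f (j + 2) / (a j * a (j + 1) * qG a f (j + 1))

lemma zadd12 (j : ZMod 3) : j + 1 + 2 = j := by revert j; decide
lemma zadd21 (j : ZMod 3) : j + 2 + 1 = j := by revert j; decide
lemma zadd11 (j : ZMod 3) : j + 1 + 1 = j + 2 := by revert j; decide
lemma zadd22 (j : ZMod 3) : j + 2 + 2 = j + 1 := by revert j; decide

section identities

variable {K : Type*} [Field K] {a f : ZMod 3 → K}

/-- Substituting `T(f)` into `Gⱼ` returns `aⱼ₊₁ aⱼ₊₂ Dⱼ`. -/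
lemma qG_qT (hD : ∀ j, qD a f j ≠ 0) (j : ZMod 3) :
    qG a (qT a f) j = a (j + 1) * a (j + 2) * qD a f j := by
  have h0 := hD j
  have h1 := hD (j + 1)
  have h2 := hD (j + 2)
  simp only [qG, qT, zadd12, zadd21, zadd11, zadd22]
  field_simp
  simp only [qD, zadd21, zadd11]
  ring

/-- Substituting `T⁻¹(f)` into `Dⱼ` returns `Gⱼ / (aⱼ₊₁ aⱼ₊₂)`. -/
lemma qD_qTinv (ha : ∀ j, a j ≠ 0) (hG : ∀ j, qG a f j ≠ 0) (j : ZMod 3) :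
    qD a (qTinv a f) j = qG a f j / (a (j + 1) * a (j + 2)) := by
  have h0 := hG j
  have h1 := hG (j + 1)
  have h2 := hG (j + 2)
  have a0 := ha j
  have a1 := ha (j + 1)
  have a2 := ha (j + 2)
  simp only [qD, qTinv, zadd12, zadd11]
  field_simp
  simp only [qG, zadd12, zadd21, zadd11, zadd22]
  ring

lemma qTinv_qT (ha : ∀ j, a j ≠ 0) (hD : ∀ j, qD a f j ≠ 0) (j : ZMod 3) :
    qTinv a (qT a f) j = f j := by
  have h0 := hD j
  have h1 := hD (j + 1)
  have h2 := hD (j + 2)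
  have a0 := ha j
  have a1 := ha (j + 1)
  have a2 := ha (j + 2)
  rw [qTinv, qG_qT hD, qG_qT hD]
  simp only [qT, zadd12, zadd21, zadd11, zadd22]
  field_simp

lemma qT_qTinv (ha : ∀ j, a j ≠ 0) (hG : ∀ j, qG a f j ≠ 0) (j : ZMod 3) :
    qT a (qTinv a f) j = f j := by
  have h0 := hG j
  have h1 := hG (j + 1)
  have h2 := hG (j + 2)
  have a0 := ha j
  have a1 := ha (j + 1)
  have a2 := ha (j + 2)
  rw [qT, qD_qTinv ha hG, qD_qTinv ha hG]
  simp only [qTinv, zadd12, zadd21, zadd11, zadd22]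
  field_simp

end identities

/-- A criterion for injectivity of a substitution `φ`: it suffices that a substitution `ψ`, applied
to a fraction `n / d` representing `φ(Xᵢ)` with `ψ(d) ≠ 0`, gives back `Xᵢ`. Then `ψ` inverts `φ`
on all polynomials in the same sense. -/
lemma injective_of_formal_inverse (φ ψ : PolyQ →ₐ[ℂ] LQ)
    (h : ∀ i, ∃ n d : PolyQ, φ (X i) * algebraMap PolyQ LQ d = algebraMap PolyQ LQ n ∧
      ψ d ≠ 0 ∧ ψ n = algebraMap PolyQ LQ (X i) * ψ d) : Function.Injective φ := by
  have key : ∀ p : PolyQ, ∃ n d : PolyQ,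
      φ p * algebraMap PolyQ LQ d = algebraMap PolyQ LQ n ∧
      ψ d ≠ 0 ∧ ψ n = algebraMap PolyQ LQ p * ψ d := by
    intro p
    induction p using MvPolynomial.induction_on with
    | C c =>
      refine ⟨C c, 1, ?_, by simp, ?_⟩
      · rw [map_one, mul_one]
        change φ (algebraMap ℂ PolyQ c) = algebraMap PolyQ LQ (algebraMap ℂ PolyQ c)
        rw [AlgHom.commutes, ← IsScalarTower.algebraMap_apply]
      · rw [map_one, mul_one]
        change ψ (algebraMap ℂ PolyQ c) = algebraMap PolyQ LQ (algebraMap ℂ PolyQ c)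
        rw [AlgHom.commutes, ← IsScalarTower.algebraMap_apply]
    | add p q hp hq =>
      obtain ⟨n, d, h1, h2, h3⟩ := hp
      obtain ⟨n', d', h1', h2', h3'⟩ := hq
      refine ⟨n * d' + n' * d, d * d', ?_, by simp [h2, h2'], ?_⟩
      · simp only [map_mul, map_add, ← h1, ← h1']
        ring
      · simp only [map_mul, map_add, h3, h3']
        ring
    | mul_X p i hp =>
      obtain ⟨n, d, h1, h2, h3⟩ := hp
      obtain ⟨n', d', h1', h2', h3'⟩ := h i
      refine ⟨n * n', d * d', ?_, by simp [h2, h2'], ?_⟩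
      · simp only [map_mul, ← h1, ← h1']
        ring
      · simp only [map_mul, h3, h3']
        ring
  rw [injective_iff_map_eq_zero]
  intro p hp
  obtain ⟨n, d, h1, h2, h3⟩ := key p
  rw [hp, zero_mul] at h1
  have hn : n = 0 := (map_eq_zero_iff _ (IsFractionRing.injective PolyQ LQ)).1 h1.symm
  rw [hn, map_zero] at h3
  have := (mul_eq_zero.1 h3.symm).resolve_right h2
  exact (map_eq_zero_iff _ (IsFractionRing.injective PolyQ LQ)).1 this

lemma algHom_ext_av_fv {F G : LQ →ₐ[ℂ] LQ} (ha : ∀ j, F (av j) = G (av j))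
    (hf : ∀ j, F (fv j) = G (fv j)) : F = G := by
  have hp : F.comp (IsScalarTower.toAlgHom ℂ PolyQ LQ) =
      G.comp (IsScalarTower.toAlgHom ℂ PolyQ LQ) := by
    apply MvPolynomial.algHom_ext
    rintro (j | j)
    · exact ha j
    · exact hf j
  refine AlgHom.ext fun x => ?_
  obtain ⟨p, q, _, rfl⟩ := IsFractionRing.div_surjective (A := PolyQ) x
  have h1 : F (algebraMap PolyQ LQ p) = G (algebraMap PolyQ LQ p) := DFunLike.congr_fun hp p
  have h2 : F (algebraMap PolyQ LQ q) = G (algebraMap PolyQ LQ q) := DFunLike.congr_fun hp q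
  rw [map_div₀, map_div₀, h1, h2]

lemma posRat_qD {f : ZMod 3 → LQ} (hf : ∀ j, PosRat (f j)) (j : ZMod 3) : PosRat (qD av f j) :=
  (PosRat.one.add ((PosRat.av _).mul (hf _))).add
    ((((PosRat.av _).mul (PosRat.av _)).mul (hf _)).mul (hf _))

lemma posRat_qG {f : ZMod 3 → LQ} (hf : ∀ j, PosRat (f j)) (j : ZMod 3) : PosRat (qG av f j) :=
  (((PosRat.av _).mul (PosRat.av _)).add ((PosRat.av _).mul (hf _))).add ((hf _).mul (hf _))

lemma posRat_qT {f : ZMod 3 → LQ} (hf : ∀ j, PosRat (f j)) (j : ZMod 3) : PosRat (qT av f j) :=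
  ((((PosRat.av _).mul (PosRat.av _)).mul (hf _)).mul (posRat_qD hf _)).div (posRat_qD hf _)

lemma posRat_qTinv {f : ZMod 3 → LQ} (hf : ∀ j, PosRat (f j)) (j : ZMod 3) :
    PosRat (qTinv av f j) :=
  ((hf _).mul (posRat_qG hf _)).div (((PosRat.av _).mul (PosRat.av _)).mul (posRat_qG hf _))

section transport

variable {A B H : Type*} [CommRing A] [CommRing B] [FunLike H A B] [RingHomClass H A B]

lemma map_qD (F : H) (a f : ZMod 3 → A) (j : ZMod 3) :
    F (qD a f j) = qD (fun i => F (a i)) (fun i => F (f i)) j := by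
  simp [qD]

lemma map_qG (F : H) (a f : ZMod 3 → A) (j : ZMod 3) :
    F (qG a f j) = qG (fun i => F (a i)) (fun i => F (f i)) j := by
  simp [qG]

end transport

lemma map_qT (F : LQ →ₐ[ℂ] LQ) (a f : ZMod 3 → LQ) (j : ZMod 3) :
    F (qT a f j) = qT (fun i => F (a i)) (fun i => F (f i)) j := by
  simp [qT, map_qD]

lemma map_qTinv (F : LQ →ₐ[ℂ] LQ) (a f : ZMod 3 → LQ) (j : ZMod 3) :
    F (qTinv a f j) = qTinv (fun i => F (a i)) (fun i => F (f i)) j := by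
  simp [qTinv, map_qG]

/-- The polynomial substitution `aⱼ ↦ aⱼ`, `fⱼ ↦ gⱼ`. -/
def substF (g : ZMod 3 → LQ) : PolyQ →ₐ[ℂ] LQ := aeval (Sum.elim av g)

lemma substF_inl (g : ZMod 3 → LQ) (j : ZMod 3) : substF g (X (Sum.inl j)) = av j := by
  simp [substF]

lemma substF_inr (g : ZMod 3 → LQ) (j : ZMod 3) : substF g (X (Sum.inr j)) = g j := by
  simp [substF]

lemma substF_qT_injective : Function.Injective (substF (qT av fv)) := by
  have hav : ∀ j, av j ≠ 0 := fun j => (PosRat.av j).ne_zero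
  have hG : ∀ j, qG av fv j ≠ 0 := fun j => (posRat_qG PosRat.fv j).ne_zero
  have hD : ∀ j, qD av fv j ≠ 0 := fun j => (posRat_qD PosRat.fv j).ne_zero
  have hD' : ∀ j, qD av (qTinv av fv) j ≠ 0 :=
    fun j => (posRat_qD (posRat_qTinv PosRat.fv) j).ne_zero
  apply injective_of_formal_inverse _ (substF (qTinv av fv))
  rintro (j | j)
  · refine ⟨X (Sum.inl j), 1, by simp [substF_inl, av], by simp, by simp [substF_inl, av]⟩
  · let a : ZMod 3 → PolyQ := fun i => X (Sum.inl i)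
    let f : ZMod 3 → PolyQ := fun i => X (Sum.inr i)
    refine ⟨a j * a (j + 1) * f (j + 1) * qD a f (j + 2), qD a f j, ?_, ?_, ?_⟩
    · rw [substF_inr, map_mul, map_mul, map_mul, map_qD, map_qD]
      exact div_mul_cancel₀ _ (hD j)
    · simp only [map_qD, a, f, substF_inl, substF_inr]
      exact hD' j
    · simp only [map_mul, map_qD, a, f, substF_inl, substF_inr]
      exact (div_eq_iff (hD' j)).1 (qT_qTinv hav hG j)

/-- The time evolution, as an endomorphism of the function field. -/
def evolHom : LQ →ₐ[ℂ] LQ := IsFractionRing.liftAlgHom substF_qT_injective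

lemma evolHom_av (j : ZMod 3) : evolHom (av j) = av j := by
  rw [evolHom, av, IsFractionRing.liftAlgHom_apply, IsFractionRing.lift_algebraMap]
  exact substF_inl _ j

lemma evolHom_fv (j : ZMod 3) : evolHom (fv j) = qT av fv j := by
  rw [evolHom, fv, IsFractionRing.liftAlgHom_apply, IsFractionRing.lift_algebraMap]
  exact substF_inr _ j

lemma evolHom_surjective : Function.Surjective evolHom := by
  have hav : ∀ j, av j ≠ 0 := fun j => (PosRat.av j).ne_zero
  have hD : ∀ j, qD av fv j ≠ 0 := fun j => (posRat_qD PosRat.fv j).ne_zero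
  have hf : ∀ j, fv j ∈ evolHom.fieldRange := fun j => by
    refine ⟨qTinv av fv j, ?_⟩
    change evolHom (qTinv av fv j) = fv j
    rw [map_qTinv]
    simp only [evolHom_av, evolHom_fv]
    exact qTinv_qT hav hD j
  have hp : ∀ p : PolyQ, algebraMap PolyQ LQ p ∈ evolHom.fieldRange := by
    intro p
    induction p using MvPolynomial.induction_on with
    | C c =>
      change algebraMap PolyQ LQ (algebraMap ℂ PolyQ c) ∈ _
      rw [← IsScalarTower.algebraMap_apply]
      exact IntermediateField.algebraMap_mem _ c
    | add p q hp hq => rw [map_add]; exact add_mem hp hq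
    | mul_X p i hp =>
      rw [map_mul]
      refine mul_mem hp ?_
      rcases i with j | j
      · exact ⟨av j, evolHom_av j⟩
      · exact hf j
  intro x
  obtain ⟨p, q, _, rfl⟩ := IsFractionRing.div_surjective (A := PolyQ) x
  exact div_mem (hp p) (hp q)

/-- The time evolution, as an automorphism of the function field. -/
def evol : LQ ≃ₐ[ℂ] LQ :=
  AlgEquiv.ofBijective evolHom ⟨evolHom.toRingHom.injective, evolHom_surjective⟩

lemma evol_av (j : ZMod 3) : evol (av j) = av j := evolHom_av j

lemma evol_fv (j : ZMod 3) : evol (fv j) = qT av fv j := evolHom_fv j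

lemma algEquiv_ext_av_fv {F G : LQ ≃ₐ[ℂ] LQ} (ha : ∀ j, F (av j) = G (av j))
    (hf : ∀ j, F (fv j) = G (fv j)) : F = G := by
  have h : (F : LQ →ₐ[ℂ] LQ) = G := algHom_ext_av_fv ha hf
  exact AlgEquiv.ext fun x => DFunLike.congr_fun h x

lemma map_qT_equiv (F : LQ ≃ₐ[ℂ] LQ) (a f : ZMod 3 → LQ) (j : ZMod 3) :
    F (qT a f j) = qT (fun i => F (a i)) (fun i => F (f i)) j :=
  map_qT (F : LQ →ₐ[ℂ] LQ) a f j

/-- Every index is `i`, `i + 1` or `i + 2`. -/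
lemma zmod3_cases (i j : ZMod 3) : j = i ∨ j = i + 1 ∨ j = i + 2 := by
  revert i j; decide

/-- The values of the reflection `sᵢ` on the generators, with the exponents from the Cartan and
orientation matrices written out: `(a', f')` is the image of `(a, f)`, and `r = (aᵢ + fᵢ)/(1 + aᵢfᵢ)`
is the factor by which the neighbours of `fᵢ` are rescaled. -/
structure IsReflected {K : Type*} [Field K] (i : ZMod 3) (a f a' f' : ZMod 3 → K) : Prop where
  a0 : a' i = (a i)⁻¹
  a1 : a' (i + 1) = a (i + 1) * a i
  a2 : a' (i + 2) = a (i + 2) * a i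
  f0 : f' i = f i
  f1 : f' (i + 1) = f (i + 1) * ((a i + f i) / (1 + a i * f i))
  f2 : f' (i + 2) = f (i + 2) / ((a i + f i) / (1 + a i * f i))

section reflection

variable {K : Type*} [Field K] {i : ZMod 3} {a f a' f' : ZMod 3 → K}

lemma IsReflected.qD_zero (h : IsReflected i a f a' f') (ha : a i ≠ 0)
    (hv : 1 + a i * f i ≠ 0) :
    qD a' f' i = (a i + f i) / (1 + a i * f i) / a i * qD a f i := by
  simp only [qD, h.a0, h.a1, h.f0, h.f1]
  field_simp

lemma IsReflected.qD_two (h : IsReflected i a f a' f') (ha : a i ≠ 0) (hu : a i + f i ≠ 0) :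
    qD a' f' (i + 2) = qD a f (i + 2) := by
  simp only [qD, zadd21, h.a0, h.a2, h.f0, h.f2]
  field_simp
  ring

/-- `T` sends the factor `(aᵢ + fᵢ)/(1 + aᵢfᵢ)` to `aᵢ Dᵢ₊₁ / sᵢ(Dᵢ₊₁)`. -/
lemma IsReflected.ratio (h : IsReflected i a f a' f') (hu : a i + f i ≠ 0)
    (hv : 1 + a i * f i ≠ 0) (hD : qD a f i ≠ 0) :
    (a i + qT a f i) / (1 + a i * qT a f i) =
      a i * qD a f (i + 1) / qD a' f' (i + 1) := by
  have hnum : a i + qT a f i = a i * qD a f (i + 1) * ((1 + a i * f i) / qD a f i) := by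
    rw [qT]
    field_simp
    simp only [qD, zadd21, zadd11]
    ring
  have hden : 1 + a i * qT a f i = qD a' f' (i + 1) * ((1 + a i * f i) / qD a f i) := by
    rw [qT]
    field_simp
    simp only [qD, zadd21, zadd11, h.a1, h.a2, h.f1, h.f2]
    field_simp
    ring
  rw [hnum, hden, mul_div_mul_right _ _ (div_ne_zero hv hD)]

/-- If `(a', f')` is the reflection of `(a, f)`, then `(a', T(f'))` is the reflection of
`(a, T(f))`: this is the commutation of `T` and `sᵢ` on the generators. -/
lemma IsReflected.qT (h : IsReflected i a f a' f') (ha : ∀ j, a j ≠ 0) (hu : a i + f i ≠ 0)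
    (hv : 1 + a i * f i ≠ 0) (hD : ∀ j, qD a f j ≠ 0) (hD' : qD a' f' (i + 1) ≠ 0) :
    IsReflected i a (qT a f) a' (qT a' f') := by
  have a0 := ha i
  have hD0 := hD i
  have hD1 := hD (i + 1)
  have hD2 := hD (i + 2)
  refine ⟨h.a0, h.a1, h.a2, ?_, ?_, ?_⟩
  · simp only [_root_.qT, h.qD_zero a0 hv, h.qD_two a0 hu, h.a0, h.a1, h.f1]
    field_simp
  · rw [h.ratio hu hv hD0]
    simp only [_root_.qT, zadd12, zadd11, h.qD_zero a0 hv, h.a1, h.a2, h.f2]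
    field_simp
  · rw [h.ratio hu hv hD0]
    simp only [_root_.qT, zadd21, zadd22, h.qD_two a0 hu, h.a0, h.a2, h.f0]
    field_simp

end reflection

/-- the assignment T(aⱼ) = aⱼ,
T(fⱼ) = aⱼa_{j+1}f_{j+1}(1 + a_{j+2}f_{j+2} + a_{j+2}aⱼf_{j+2}fⱼ)/(1 + aⱼfⱼ + aⱼa_{j+1}fⱼf_{j+1})
extends to an automorphism T of L = ℂ(a₀,a₁,a₂,f₀,f₁,f₂), and T commutes with
each of the Weyl group automorphisms s₀, s₁, s₂, π. -/
theorem qPIV_time_evolution_commutes_with_Weyl_action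
    (s : ZMod 3 → (LQ ≃ₐ[ℂ] LQ)) (π : LQ ≃ₐ[ℂ] LQ)
    (hsa : ∀ i j : ZMod 3, s i (av j) = av j * av i ^ (-(cartanA2 i j)))
    (hsf : ∀ i j : ZMod 3,
      s i (fv j) = fv j * ((av i + fv i) / (1 + av i * fv i)) ^ (orientA2 i j))
    (hπa : ∀ j : ZMod 3, π (av j) = av (j + 1))
    (hπf : ∀ j : ZMod 3, π (fv j) = fv (j + 1)) :
    ∃ T : LQ ≃ₐ[ℂ] LQ,
      (∀ j : ZMod 3, T (av j) = av j) ∧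
      (∀ j : ZMod 3, T (fv j) =
        av j * av (j + 1) * fv (j + 1) *
          (1 + av (j + 2) * fv (j + 2) + av (j + 2) * av j * fv (j + 2) * fv j) /
          (1 + av j * fv j + av j * av (j + 1) * fv j * fv (j + 1))) ∧
      (∀ i : ZMod 3, T * s i = s i * T) ∧
      T * π = π * T := by
  have hav : ∀ j, av j ≠ 0 := fun j => (PosRat.av j).ne_zero
  have hD : ∀ j, qD av fv j ≠ 0 := fun j => (posRat_qD PosRat.fv j).ne_zero
  have hu : ∀ i, PosRat (av i + fv i) := fun i => (PosRat.av i).add (PosRat.fv i)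
  have hv : ∀ i, PosRat (1 + av i * fv i) :=
    fun i => PosRat.one.add ((PosRat.av i).mul (PosRat.fv i))
  have e1 : ∀ i : ZMod 3, i ≠ i + 1 := by decide
  have e2 : ∀ i : ZMod 3, i ≠ i + 2 := by decide
  have e21 : ∀ i : ZMod 3, i + 2 ≠ i + 1 := by decide
  have hrefl : ∀ i, IsReflected i av fv (fun j => s i (av j)) (fun j => s i (fv j)) := by
    intro i
    have hai := hav i
    refine ⟨?_, ?_, ?_, ?_, ?_, ?_⟩
    · simp only [hsa, cartanA2, if_true, zpow_neg]
      field_simp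
    · simp [hsa, cartanA2, e1 i]
    · simp [hsa, cartanA2, e2 i]
    · simp [hsf, orientA2]
    · simp [hsf, orientA2, (e1 i).symm]
    · simp only [hsf, orientA2, (e2 i).symm, e21 i, if_false, zpow_neg, zpow_one, div_eq_mul_inv]
  refine ⟨evol, evol_av, fun j => ?_, fun i => ?_, ?_⟩
  · rw [evol_fv]
    simp only [qT, qD, zadd21]
  · have hreflT := (hrefl i).qT hav (hu i).ne_zero (hv i).ne_zero hD <| by
      rw [← map_qD]
      exact (map_ne_zero (s i)).2 (hD _)
    apply algEquiv_ext_av_fv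
    · intro j
      simp only [AlgEquiv.mul_apply, evol_av, hsa, map_mul, map_zpow₀]
    · intro j
      simp only [AlgEquiv.mul_apply, evol_fv, map_qT_equiv (s i)]
      rcases zmod3_cases i j with rfl | rfl | rfl
      · rw [hreflT.f0, (hrefl j).f0, evol_fv]
      · rw [hreflT.f1, (hrefl i).f1]
        simp only [map_mul, map_div₀, map_add, map_one, evol_av, evol_fv]
      · rw [hreflT.f2, (hrefl i).f2]
        simp only [map_mul, map_div₀, map_add, map_one, evol_av, evol_fv]
  · apply algEquiv_ext_av_fv
    · intro j
      simp only [AlgEquiv.mul_apply, evol_av, hπa]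
    · intro j
      simp only [AlgEquiv.mul_apply, evol_fv, map_qT_equiv π, hπa, hπf]
      simp only [qT, qD, add_right_comm j 1]


end
end

section
/- Let α₀, α₁, α₂ ∈ ℂ with α₀ + α₁ + α₂ = 1, let I ⊆ ℝ be an open interval, and let φ₀, φ₁, φ₂ : I → ℂ be differentiable functions satisfying the symmetric form of P_IV: φ₀' = φ₀(φ₁−φ₂)+α₀, φ₁' = φ₁(φ₂−φ₀)+α₁, φ₂' = φ₂(φ₀−φ₁)+α₂, together with the normalization φ₀(t)+φ₁(t)+φ₂(t) = t for all t ∈ I. Then y := φ₀ is twice differentiable, and at every t ∈ I with y(t) ≠ 0 it satisfies the second-order equation y'' = (y')²/(2y) + (3/2)y³ − 2ty² + (t²/2 + α₁ − α₂)y − α₀²/(2y); i.e., the symmetric form is equivalent to the fourth Painlevé equation for y = φ₀. -/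
/-!
Write `d = φ₁ - φ₂` and `s = φ₁ + φ₂ = t - y`. Differentiating `y' = y d + α₀` by the product rule
gives `y'' = y' d + y (2 φ₁ φ₂ - y s + α₁ - α₂)`. Since `2 φ₁ φ₂ = (s² - d²) / 2`, this equals
`(y d² / 2 + α₀ d) + y (s² / 2 - y s + α₁ - α₂)`. The first bracket is `((y')² - α₀²) / (2 y)`,
and `s = t - y` turns the rest into the polynomial part of the fourth Painlevé equation.
-/

/-!
Equivalence of the symmetric form of the fourth Painlevé equation with the
single second-order fourth Painlevé equation for y = φ₀, under the
normalization α₀ + α₁ + α₂ = 1 and φ₀ + φ₁ + φ₂ = t.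
-/

open Set

/-- if φ₀, φ₁, φ₂ solve the symmetric form of P_IV on an open
interval, with α₀+α₁+α₂ = 1 and φ₀+φ₁+φ₂ = t, then y = φ₀ is twice
differentiable, and wherever y ≠ 0 it satisfies
y'' = (y')²/(2y) + (3/2)y³ − 2ty² + (t²/2 + α₁ − α₂)y − α₀²/(2y).
(The first derivative y' is the function t ↦ φ₀(t)(φ₁(t) − φ₂(t)) + α₀
provided by the system itself.) -/
theorem symmetric_PIV_implies_PIV
    (α0 α1 α2 : ℂ) (hα : α0 + α1 + α2 = 1)
    (a b : ℝ) (φ0 φ1 φ2 : ℝ → ℂ)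
    (h0 : ∀ t ∈ Ioo a b, HasDerivAt φ0 (φ0 t * (φ1 t - φ2 t) + α0) t)
    (h1 : ∀ t ∈ Ioo a b, HasDerivAt φ1 (φ1 t * (φ2 t - φ0 t) + α1) t)
    (h2 : ∀ t ∈ Ioo a b, HasDerivAt φ2 (φ2 t * (φ0 t - φ1 t) + α2) t)
    (hnorm : ∀ t ∈ Ioo a b, φ0 t + φ1 t + φ2 t = (t : ℂ)) :
    ∀ t ∈ Ioo a b, ∃ c : ℂ,
      HasDerivAt (fun u => φ0 u * (φ1 u - φ2 u) + α0) c t ∧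
      (φ0 t ≠ 0 →
        c = (φ0 t * (φ1 t - φ2 t) + α0) ^ 2 / (2 * φ0 t)
            + (3 / 2) * φ0 t ^ 3 - 2 * (t : ℂ) * φ0 t ^ 2
            + ((t : ℂ) ^ 2 / 2 + α1 - α2) * φ0 t
            - α0 ^ 2 / (2 * φ0 t)) := by
  intro t ht
  refine ⟨_, ((h0 t ht).mul ((h1 t ht).sub (h2 t ht))).add_const α0, fun hy => ?_⟩
  -- Eliminating `t` through the normalization leaves a rational identity in `φ0 t, φ1 t, φ2 t`.
  rw [← hnorm t ht]
  simp only [Pi.sub_apply]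
  field_simp
  ring
end

section
/- Let α₁, α₂ ∈ ℂ and set α₀ := 1 − α₁ − α₂. Let I ⊆ ℝ be an open interval and let q, p : I → ℂ be differentiable functions satisfying the Hamiltonian system dq/dt = ∂H/∂p, dp/dt = −∂H/∂q for the fourth Painlevé Hamiltonian H = qp(2p−q−2t) − 2α₁p − α₂q, i.e. q' = 4qp − q² − 2tq − 2α₁ and p' = −2p² + 2qp + 2tp + α₂. Then the functions φ₀ := −p + q/2 + t, φ₁ := −q/2, φ₂ := p satisfy dφⱼ/dt = 2φⱼ(φ_{j+1} − φ_{j+2}) + αⱼ for j = 0, 1, 2 (indices modulo 3), which is the symmetric form of P_IV up to rescaling. -/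
/-!
The Hamiltonian system of the fourth Painlevé equation, with Hamiltonian
H = qp(2p − q − 2t) − 2α₁p − α₂q, is transformed into the symmetric form of
P_IV by the invariant divisors φ₀ = −p + q/2 + t, φ₁ = −q/2, φ₂ = p.
-/

open Set

/-- if (q,p) solves the Hamiltonian system
q' = 4qp − q² − 2tq − 2α₁, p' = −2p² + 2qp + 2tp + α₂ of H_IV on an open
interval, then φ₀ = −p + q/2 + t, φ₁ = −q/2, φ₂ = p satisfy
φⱼ' = 2φⱼ(φ_{j+1} − φ_{j+2}) + αⱼ (indices mod 3, α₀ := 1 − α₁ − α₂),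
the symmetric form of P_IV up to rescaling. -/
theorem hamiltonian_PIV_to_symmetric_form
    (α1 α2 : ℂ) (a b : ℝ) (q p : ℝ → ℂ)
    (hq : ∀ t ∈ Ioo a b,
      HasDerivAt q (4 * q t * p t - q t ^ 2 - 2 * (t : ℂ) * q t - 2 * α1) t)
    (hp : ∀ t ∈ Ioo a b,
      HasDerivAt p (-2 * p t ^ 2 + 2 * q t * p t + 2 * (t : ℂ) * p t + α2) t) :
    let α0 : ℂ := 1 - α1 - α2
    let φ0 : ℝ → ℂ := fun t => -p t + q t / 2 + (t : ℂ)
    let φ1 : ℝ → ℂ := fun t => -(q t / 2)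
    let φ2 : ℝ → ℂ := p
    ∀ t ∈ Ioo a b,
      HasDerivAt φ0 (2 * φ0 t * (φ1 t - φ2 t) + α0) t ∧
      HasDerivAt φ1 (2 * φ1 t * (φ2 t - φ0 t) + α1) t ∧
      HasDerivAt φ2 (2 * φ2 t * (φ0 t - φ1 t) + α2) t := by
  intro α0 φ0 φ1 φ2 t ht
  have hq' := (hq t ht).div_const 2
  have hp' := hp t ht
  have hid : HasDerivAt (fun s : ℝ => (s : ℂ)) 1 t := (hasDerivAt_id t).ofReal_comp
  refine ⟨(hp'.neg.add hq' |>.add hid).congr_deriv ?_, hq'.neg.congr_deriv ?_,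
    hp'.congr_deriv ?_⟩
  all_goals
    simp only [α0, φ0, φ1, φ2]
    ring
end

section
/- Let F = ℂ(q, p, t, α₁) be the field of rational functions in four variables and set α₀ := 1 − α₁. Let δ be the unique ℂ-derivation of F with δ(t) = 1, δ(α₁) = 0, δ(q) = p − q² + t/2 and δ(p) = 2qp − α₁ (the Hamiltonian vector field of H = (1/2)p(p−2q²+t) + α₁q for the second Painlevé equation, δ(q) = ∂H/∂p, δ(p) = −∂H/∂q). Define s₁, π : F → F by s₁: (q, p, t, α₁) ↦ (q − α₁/p, p, t, −α₁) and π: (q, p, t, α₁) ↦ (−q, −p + 2q² − t, t, 1 − α₁), and set s₀ := π s₁ π. Then: (1) s₁ and π are field automorphisms of F with s₁² = id and π² = id, hence s₀ is an automorphism with s₀² = id; (2) s₁ and π (hence also s₀) commute with the derivation δ, i.e. they are Bäcklund transformations of the second Painlevé equation; (3) s₁ and π preserve the Poisson bracket {φ,ψ} = (∂φ/∂p)(∂ψ/∂q) − (∂φ/∂q)(∂ψ/∂p) (partial derivatives taken with t, α₁ as constants), i.e. they are canonical transformations; and (4) the product s₀s₁ has infinite order, so the subgroup ⟨s₀, s₁⟩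 of Aut(F) is isomorphic to the affine Weyl group W(A₁⁽¹⁾), the infinite dihedral group. -/
/-!
Bäcklund transformations of the second Painlevé equation.  The field
F = ℂ(q,p,t,α₁) is realized as the fraction field of `MvPolynomial (Fin 4) ℂ`
with q = X 0, p = X 1, t = X 2, α₁ = X 3.  The Hamiltonian vector field of
H = (1/2)p(p−2q²+t) + α₁q is the derivation δ with δ(q) = p − q² + t/2,
δ(p) = 2qp − α₁, δ(t) = 1, δ(α₁) = 0.  The Poisson bracket is expressed via
the partial-derivative derivations ∂/∂q and ∂/∂p (characterized by their
values on the four generators).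
-/

open MvPolynomial

noncomputable section

abbrev PolyP2 := MvPolynomial (Fin 4) ℂ

abbrev FP2 := FractionRing PolyP2

def qF : FP2 := algebraMap PolyP2 FP2 (X 0)
def pF : FP2 := algebraMap PolyP2 FP2 (X 1)
def tF : FP2 := algebraMap PolyP2 FP2 (X 2)
def αF : FP2 := algebraMap PolyP2 FP2 (X 3)

/-!
A derivation and an automorphism of F = ℂ(q,p,t,α₁) are both determined by their values on the
four generators, so involutivity and commutation with δ are finite computations.  For the Poisson
bracket, the same principle (`FP2.chain_rule`) yields

* ∂_q ∘ s₁ = s₁ ∘ ∂_q and ∂_p ∘ s₁ = s₁ ∘ ∂_p + (α₁/p²) · s₁ ∘ ∂_q,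
* ∂_q ∘ π = −π ∘ ∂_q + 4q · π ∘ ∂_p and ∂_p ∘ π = −π ∘ ∂_p,

and both Jacobian matrices have determinant 1.

The product s₀s₁ translates α₁ by −2, so (s₀s₁)ⁱ α₁ = α₁ − 2i for all integers i.  Hence s₀s₁ has
infinite order, and s₁(s₀s₁)ⁱ, which sends α₁ to −α₁ − 2i, is never the identity.  Two involutions
with these properties generate an infinite dihedral group (`closure_pair_mulEquiv_dihedral`).
-/

/-- A derivation of `FP2` is determined by its values on the four generators. -/
lemma FP2.derivation_ext {D E : Derivation ℂ FP2 FP2} (hq : D qF = E qF) (hp : D pF = E pF)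
    (ht : D tF = E tF) (hα : D αF = E αF) : D = E := by
  have key : ∀ a : PolyP2, D (algebraMap PolyP2 FP2 a) = E (algebraMap PolyP2 FP2 a) := by
    have h : D.compAlgebraMap PolyP2 = E.compAlgebraMap PolyP2 := by
      apply MvPolynomial.derivation_ext
      intro i
      fin_cases i
      exacts [hq, hp, ht, hα]
    exact fun a => congrArg (fun D₀ : Derivation ℂ PolyP2 FP2 => D₀ a) h
  ext x
  obtain ⟨a, b, hb, rfl⟩ := IsFractionRing.div_surjective (A := PolyP2) x
  simp only [Derivation.leibniz_div, key]

lemma FP2.algEquiv_ext {s σ : FP2 ≃ₐ[ℂ] FP2} (hq : s qF = σ qF) (hp : s pF = σ pF)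
    (ht : s tF = σ tF) (hα : s αF = σ αF) : s = σ := by
  have key : ∀ a : PolyP2, s (algebraMap PolyP2 FP2 a) = σ (algebraMap PolyP2 FP2 a) := by
    have h : s.toAlgHom.comp (IsScalarTower.toAlgHom ℂ PolyP2 FP2) =
        σ.toAlgHom.comp (IsScalarTower.toAlgHom ℂ PolyP2 FP2) := by
      apply MvPolynomial.algHom_ext
      intro i
      fin_cases i
      exacts [hq, hp, ht, hα]
    exact fun a => congrArg (fun f : PolyP2 →ₐ[ℂ] FP2 => f a) h
  ext x
  obtain ⟨a, b, hb, rfl⟩ := IsFractionRing.div_surjective (A := PolyP2) x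
  simp only [map_div₀, key]

/-- The conjugate `s⁻¹ ∘ D ∘ s` of a derivation by an automorphism. -/
def FP2.conj (s : FP2 ≃ₐ[ℂ] FP2) (D : Derivation ℂ FP2 FP2) : Derivation ℂ FP2 FP2 :=
  Derivation.mk' (s.symm.toLinearMap ∘ₗ D.toLinearMap ∘ₗ s.toLinearMap) (by
    intro a b
    simp)

lemma FP2.conj_apply (s : FP2 ≃ₐ[ℂ] FP2) (D : Derivation ℂ FP2 FP2) (x : FP2) :
    FP2.conj s D x = s.symm (D (s x)) := rfl

/-- Chain rule: an identity `D ∘ s = a · (s ∘ D₁) + b · (s ∘ D₂)` only has to be checked on the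
four generators. -/
lemma FP2.chain_rule (s : FP2 ≃ₐ[ℂ] FP2) (D D₁ D₂ : Derivation ℂ FP2 FP2) (a b : FP2)
    (hq : D (s qF) = a * s (D₁ qF) + b * s (D₂ qF))
    (hp : D (s pF) = a * s (D₁ pF) + b * s (D₂ pF))
    (ht : D (s tF) = a * s (D₁ tF) + b * s (D₂ tF))
    (hα : D (s αF) = a * s (D₁ αF) + b * s (D₂ αF)) (x : FP2) :
    D (s x) = a * s (D₁ x) + b * s (D₂ x) := by
  have h : FP2.conj s D = s.symm a • D₁ + s.symm b • D₂ := by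
    apply FP2.derivation_ext <;>
      simp [FP2.conj_apply, hq, hp, ht, hα]
  have h2 := congrArg (fun E : Derivation ℂ FP2 FP2 => s (E x)) h
  simpa [FP2.conj_apply] using h2

/-- Two involutions `a`, `b` generate an infinite dihedral group as soon as `a * b` has infinite
order and no `b * (a * b) ^ i` is trivial.  The rotation `r i` corresponds to `(a * b) ^ i` and the
reflection `sr i` to `b * (a * b) ^ i`; note that `ZMod 0` is `ℤ` by definition. -/
lemma closure_pair_mulEquiv_dihedral {G : Type*} [Group G] {a b : G} (ha : a * a = 1)
    (hb : b * b = 1) (hr : ∀ i : ℤ, (a * b) ^ i = 1 → i = 0)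
    (hsr : ∀ i : ℤ, b * (a * b) ^ i ≠ 1) :
    Nonempty (↥(Subgroup.closure {a, b}) ≃* DihedralGroup 0) := by
  have hbi : b⁻¹ = b := inv_eq_of_mul_eq_one_left hb
  have hai : a⁻¹ = a := inv_eq_of_mul_eq_one_left ha
  have hconj : ∀ i : ℤ, (a * b) ^ i * b = b * (a * b) ^ (-i) := by
    intro i
    have h : b * (a * b) * b⁻¹ = (a * b)⁻¹ := by
      simp [hai, hbi, mul_assoc, hb]
    have h2 : b * (a * b) ^ (-i) * b⁻¹ = (a * b) ^ i := by
      rw [← conj_zpow, h, inv_zpow, zpow_neg, inv_inv]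
    rw [← h2, inv_mul_cancel_right]
  let F : DihedralGroup 0 → G := fun x => match x with
    | .r i => (a * b) ^ (show ℤ from i)
    | .sr i => b * (a * b) ^ (show ℤ from i)
  have hF : ∀ x y, F (x * y) = F x * F y := by
    rintro (i | i) (j | j)
    · exact zpow_add (a * b) (show ℤ from i) (show ℤ from j)
    · change b * (a * b) ^ ((show ℤ from j) - (show ℤ from i)) = _ * (b * _)
      rw [← mul_assoc, hconj, mul_assoc, ← zpow_add, sub_eq_neg_add]
    · change b * (a * b) ^ ((show ℤ from i) + (show ℤ from j)) = (b * _) * _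
      rw [mul_assoc, zpow_add]
    · change (a * b) ^ ((show ℤ from j) - (show ℤ from i)) = (b * _) * (b * _)
      rw [mul_assoc, ← mul_assoc ((a * b) ^ _) b, hconj, mul_assoc b, ← mul_assoc b b, hb, one_mul,
        ← zpow_add, sub_eq_neg_add]
  let f : DihedralGroup 0 →* G := MonoidHom.mk' F hF
  have hinj : Function.Injective f := by
    rw [injective_iff_map_eq_one]
    rintro (i | i) h
    · exact congrArg DihedralGroup.r (hr i h)
    · exact absurd h (hsr i)
  have hrange : f.range = Subgroup.closure {a, b} := by
    have hma : a ∈ Subgroup.closure {a, b} := Subgroup.subset_closure (by simp)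
    have hmb : b ∈ Subgroup.closure {a, b} := Subgroup.subset_closure (by simp)
    apply le_antisymm
    · rintro _ ⟨i | i, rfl⟩
      · exact Subgroup.zpow_mem _ (mul_mem hma hmb) _
      · exact mul_mem hmb (Subgroup.zpow_mem _ (mul_mem hma hmb) _)
    · have h0 : f (.sr 0) = b := by
        change b * (a * b) ^ (0 : ℤ) = b
        simp
      have h1 : f (.r 1) = a * b := zpow_one (a * b)
      rw [Subgroup.closure_le]
      rintro x (rfl | rfl)
      · refine ⟨.r 1 * .sr 0, ?_⟩
        rw [map_mul, h0, h1, mul_assoc, hb, mul_one]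
      · exact ⟨_, h0⟩
  exact ⟨((MonoidHom.ofInjective hinj).trans (MulEquiv.subgroupCongr hrange)).symm⟩

/-- for the second Painlevé equation with Hamiltonian
H = (1/2)p(p−2q²+t) + α₁q, the transformations
s₁ : (q,p,t,α₁) ↦ (q − α₁/p, p, t, −α₁) and
π : (q,p,t,α₁) ↦ (−q, −p+2q²−t, t, 1−α₁), with s₀ := πs₁π, satisfy:
(1) s₁² = π² = s₀² = 1; (2) s₁, π (hence s₀) commute with the Hamiltonian
vector field δ, i.e. they are Bäcklund transformations; (3) s₁ and π
preserve the Poisson bracket {φ,ψ} = φ_p ψ_q − φ_q ψ_p, i.e. they are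
canonical; (4) s₀s₁ has infinite order, and ⟨s₀,s₁⟩ ≅ W(A₁⁽¹⁾), the
infinite dihedral group. -/
theorem backlund_PII_infinite_dihedral
    (δ : Derivation ℂ FP2 FP2)
    (hδq : δ qF = pF - qF ^ 2 + tF / 2)
    (hδp : δ pF = 2 * qF * pF - αF)
    (hδt : δ tF = 1) (hδα : δ αF = 0)
    (dq dp : Derivation ℂ FP2 FP2)
    (hdq : dq qF = 1 ∧ dq pF = 0 ∧ dq tF = 0 ∧ dq αF = 0)
    (hdp : dp qF = 0 ∧ dp pF = 1 ∧ dp tF = 0 ∧ dp αF = 0)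
    (s1 π : FP2 ≃ₐ[ℂ] FP2)
    (hs1 : s1 qF = qF - αF / pF ∧ s1 pF = pF ∧ s1 tF = tF ∧ s1 αF = -αF)
    (hπ : π qF = -qF ∧ π pF = -pF + 2 * qF ^ 2 - tF ∧ π tF = tF ∧
      π αF = 1 - αF) :
    let s0 : FP2 ≃ₐ[ℂ] FP2 := π * s1 * π
    let pb : FP2 → FP2 → FP2 := fun φ ψ => dp φ * dq ψ - dq φ * dp ψ
    -- (1) involutivity
    (s1 * s1 = 1 ∧ π * π = 1 ∧ s0 * s0 = 1) ∧
    -- (2) Bäcklund property: commutation with the flow δ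
    (∀ x : FP2, s1 (δ x) = δ (s1 x)) ∧
    (∀ x : FP2, π (δ x) = δ (π x)) ∧
    (∀ x : FP2, s0 (δ x) = δ (s0 x)) ∧
    -- (3) canonicity: preservation of the Poisson bracket
    (∀ φ ψ : FP2, s1 (pb φ ψ) = pb (s1 φ) (s1 ψ)) ∧
    (∀ φ ψ : FP2, π (pb φ ψ) = pb (π φ) (π ψ)) ∧
    -- (4) ⟨s₀,s₁⟩ is the affine Weyl group W(A₁⁽¹⁾): infinite dihedral
    ¬ IsOfFinOrder (s0 * s1) ∧
    Nonempty (↥(Subgroup.closure {s0, s1}) ≃* DihedralGroup 0) := by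
  intro s0 pb
  obtain ⟨s1q, s1p, s1t, s1α⟩ := hs1
  obtain ⟨πq, πp, πt, πα⟩ := hπ
  obtain ⟨dqq, dqp, dqt, dqα⟩ := hdq
  obtain ⟨dpq, dpp, dpt, dpα⟩ := hdp
  have hp0 : pF ≠ 0 := by simp [pF]
  have hα0 : αF ≠ 0 := by simp [αF]
  have S2 : ∀ s : FP2 ≃ₐ[ℂ] FP2, s 2 = 2 := fun s => map_ofNat s 2
  have h11 : s1 * s1 = 1 := by
    apply FP2.algEquiv_ext <;> simp [s1q, s1p, s1t, s1α]
    ring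
  have hππ : π * π = 1 := by
    apply FP2.algEquiv_ext <;> simp [πq, πp, πt, πα, S2]
    ring
  have h00 : s0 * s0 = 1 := by
    change π * s1 * π * (π * s1 * π) = 1
    rw [mul_assoc (π * s1), ← mul_assoc π (π * s1), ← mul_assoc π π, hππ, one_mul,
      mul_assoc π, ← mul_assoc s1 s1, h11, one_mul, hππ]
  have D2 : ∀ D : Derivation ℂ FP2 FP2, D 2 = 0 := fun D => D.map_natCast 2
  have hδ1 : ∀ x, s1 (δ x) = δ (s1 x) := by
    intro x
    have := FP2.chain_rule s1 δ δ 0 1 0 ?_ ?_ ?_ ?_ x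
    · simpa using this.symm
    all_goals simp [s1q, s1p, s1t, s1α, hδq, hδp, hδt, hδα, S2, Derivation.leibniz_div]
    all_goals try (field_simp; ring)
  have hδπ : ∀ x, π (δ x) = δ (π x) := by
    intro x
    have := FP2.chain_rule π δ δ 0 1 0 ?_ ?_ ?_ ?_ x
    · simpa using this.symm
    all_goals simp [πq, πp, πt, πα, hδq, hδp, hδt, hδα, S2, Derivation.leibniz_pow, D2]
    all_goals try (field_simp; ring)
  have hdq1 : ∀ x, dq (s1 x) = s1 (dq x) := by
    intro x
    have := FP2.chain_rule s1 dq dq 0 1 0 ?_ ?_ ?_ ?_ x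
    · simpa using this
    all_goals simp [s1q, s1p, s1t, s1α, dqq, dqp, dqt, dqα, Derivation.leibniz_div]
  have hdp1 : ∀ x, dp (s1 x) = 1 * s1 (dp x) + αF / pF ^ 2 * s1 (dq x) := by
    apply FP2.chain_rule
    all_goals simp [s1q, s1p, s1t, s1α, dqq, dqp, dqt, dqα, dpq, dpp, dpt, dpα,
      Derivation.leibniz_div]
    all_goals try (field_simp)
  have hdqπ : ∀ x, dq (π x) = -1 * π (dq x) + 4 * qF * π (dp x) := by
    apply FP2.chain_rule
    all_goals simp [πq, πp, πt, πα, dqq, dqp, dqt, dqα, dpq, dpp, dpt, dpα,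
      Derivation.leibniz_pow, D2]
    all_goals try ring
  have hdpπ : ∀ x, dp (π x) = - π (dp x) := by
    intro x
    have := FP2.chain_rule π dp dp 0 (-1) 0 ?_ ?_ ?_ ?_ x
    · simpa using this
    all_goals simp [πq, πp, πt, πα, dpq, dpp, dpt, dpα, Derivation.leibniz_pow, D2]
  -- `s0 * s1` acts on the parameter as the translation `α₁ ↦ α₁ - 2`
  have hg : (s0 * s1) αF = αF - 2 := by
    simp [s0, s1α, πα]
    ring
  have hgz : ∀ i : ℤ, ((s0 * s1) ^ i) αF = αF - 2 * (i : FP2) := by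
    have hgn : ∀ n : ℕ, ((s0 * s1) ^ n) αF = αF - 2 * (n : FP2) := by
      intro n
      induction n with
      | zero => simp
      | succ n ih =>
        rw [pow_succ, AlgEquiv.mul_apply, hg, map_sub, ih, map_ofNat]
        push_cast
        ring
    intro i
    obtain ⟨n, rfl | rfl⟩ := i.eq_nat_or_neg
    · simpa using hgn n
    · have h : ((s0 * s1) ^ n) (αF + 2 * (n : FP2)) = αF := by
        rw [map_add, hgn, map_mul, map_ofNat, map_natCast]
        ring
      have h2 := congrArg ((s0 * s1) ^ (-(n : ℤ))) h
      rw [← AlgEquiv.mul_apply, ← zpow_natCast, ← zpow_add, neg_add_cancel, zpow_zero,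
        AlgEquiv.one_apply] at h2
      rw [← h2]
      push_cast
      ring
  have hr : ∀ i : ℤ, (s0 * s1) ^ i = 1 → i = 0 := by
    intro i h
    have h2 := hgz i
    rw [h, AlgEquiv.one_apply] at h2
    have h3 : (i : FP2) = 0 := by linear_combination (1 / 2 : FP2) * h2
    exact_mod_cast h3
  have hsr : ∀ i : ℤ, s1 * (s0 * s1) ^ i ≠ 1 := by
    intro i h
    have h2 := congrArg (fun s : FP2 ≃ₐ[ℂ] FP2 => s αF) h
    simp only [AlgEquiv.mul_apply, hgz, map_sub, map_mul, map_ofNat, map_intCast, s1α,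
      AlgEquiv.one_apply] at h2
    -- `α₁` would be the constant `-i`, which `s1` fixes, whereas it negates `α₁`
    have h3 : αF = -(i : FP2) := by linear_combination (-1 / 2 : FP2) * h2
    have h4 : s1 αF = αF := by rw [h3]; simp
    apply hα0
    linear_combination (-1 / 2 : FP2) * h4 + (1 / 2 : FP2) * s1α
  refine ⟨⟨h11, hππ, h00⟩, hδ1, hδπ, ?_, ?_, ?_, ?_, closure_pair_mulEquiv_dihedral h00 h11 hr hsr⟩
  · intro x
    simp only [s0, AlgEquiv.mul_apply, hδπ, hδ1]
  · intro φ ψ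
    simp only [pb, hdq1, hdp1, map_sub, map_mul]
    ring
  · intro φ ψ
    simp only [pb, hdqπ, hdpπ, map_sub, map_mul]
    ring
  · rw [isOfFinOrder_iff_pow_eq_one]
    rintro ⟨n, hn, h⟩
    have := hr n (by simpa using h)
    omega

end
end
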